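/- (Classical Łojasiewicz gradient inequality.) Let U ⊆ ℝⁿ be open, let f : U → ℝ be real analytic on U, and let y ∈ U be a critical point of f, i.e. ∇f(y) = 0. Then there exist a number α ∈ (0,1), a constant C > 0, and an open neighborhood V ⊆ U of y such that for all x ∈ V one has |f(x) - f(y)|^{1 - α/2} ≤ C·|∇f(x)|. -/

import Mathlib

/-!
The proof rests on local monomialization (`monomialization`): for every nonzero analytic germ at
the origin of `ℝⁿ` there is a family of analytic map germs (compositions of blow-ups, power
substitutions, translations and linear maps) which pull the germ back to a monomial times a unit.
However small the neighbourhoods on which the maps are considered, finitely many of the images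
cover a neighbourhood of the origin (`Cov`).

Monomialization is proved by induction on the number of variables. In suitable linear coordinates
the germ has finite order `d` in the last variable `z`, and `monOrder` is an induction on `d`. A
Tschirnhaus translation puts the germ in the form `∑ cᵢ(x) zⁱ + zᵈ u(x, z)`, with `i < d`,
`c_{d-1} = 0` and `u` a unit (`exists_tschirnhaus`). Monomialization in the remaining variables
turns the `cᵢ`, and the differences of suitable powers of them, into monomials times units, which
makes the `cᵢ` comparable (`comparable_of_sub`); a power substitution then gives them the form
`x ^ ((d - i) γ) cᵢ'`, with some `cᵢ'` a unit (`align`). Blowing up the sets `{x_j = z = 0}` uses up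
`γ` and makes the order in `z` fall below `d` (`mz_of_weighted`): a polynomial of degree `d` without
a term of degree `d - 1` is a `d`-th power of a linear form only when it is a multiple of `zᵈ`.

For a monomial times a unit, the gradient inequality follows from the derivatives in the directions
`x_j e_j` (`Mon.loj`), and the chain rule transfers it along a cover (`Loj.of_cov`).
-/

open Filter Topology

/-! ### Averaging and division with remainder -/

section Hadamard

variable {E : Type*} [NormedAddCommGroup E] [NormedSpace ℝ E]

/-- Averaging an analytic germ along a continuous path of linear maps gives an analytic germ: the
power series can be integrated term by term. -/
lemma analyticAt_integral_comp_linear {h : E → ℝ} (hh : AnalyticAt ℝ h 0)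
    {D : ℝ → E →L[ℝ] E} (hD : Continuous D) :
    AnalyticAt ℝ (fun y => ∫ t in (0 : ℝ)..1, h (D t y)) 0 := by
  obtain ⟨p, r, hp⟩ := hh
  obtain ⟨K, hK1, hK⟩ : ∃ K : NNReal, 1 ≤ K ∧ ∀ t ∈ Set.Icc (0 : ℝ) 1, ‖D t‖ ≤ K := by
    obtain ⟨C, hC⟩ := (isCompact_Icc (a := (0 : ℝ)) (b := 1)).exists_bound_of_continuousOn
      hD.continuousOn
    refine ⟨max 1 C.toNNReal, le_max_left _ _, fun t ht => (hC t ht).trans ?_⟩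
    exact (Real.le_coe_toNNReal C).trans (NNReal.coe_le_coe.2 (le_max_right _ _))
  obtain ⟨s, hs0, hsr⟩ : ∃ s : NNReal, 0 < s ∧ (s : ENNReal) < r :=
    ENNReal.lt_iff_exists_nnreal_btwn.1 hp.r_pos |>.imp fun s hs => ⟨by simpa using hs.1, hs.2⟩
  have hK0 : 0 < K := lt_of_lt_of_le one_pos hK1
  have hsum : Summable fun n => ‖p n‖ * (s : ℝ) ^ n :=
    p.summable_norm_mul_pow (hsr.trans_le hp.r_le)
  have hcont : ∀ n, Continuous fun t => (p n).compContinuousLinearMap (fun _ => D t) := by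
    intro n
    exact ((p n).compContinuousLinearMapLRight (E := fun _ => E)).cont.comp
      (continuous_pi fun _ => hD)
  have hbd : ∀ n, ∀ t ∈ Set.Icc (0 : ℝ) 1,
      ‖(p n).compContinuousLinearMap (fun _ => D t)‖ ≤ ‖p n‖ * (K : ℝ) ^ n := by
    intro n t ht
    refine ((p n).norm_compContinuousLinearMap_le _).trans ?_
    gcongr
    simpa using pow_le_pow_left₀ (norm_nonneg _) (hK t ht) n
  have hIoc : ∀ t ∈ Set.uIoc (0 : ℝ) 1, t ∈ Set.Icc (0 : ℝ) 1 := by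
    intro t ht
    rw [Set.uIoc_of_le zero_le_one] at ht
    exact ⟨ht.1.le, ht.2⟩
  let q : FormalMultilinearSeries ℝ E ℝ := fun n =>
    ∫ t in (0 : ℝ)..1, (p n).compContinuousLinearMap (fun _ => D t)
  have hq : ∀ n, ‖q n‖ ≤ ‖p n‖ * (K : ℝ) ^ n := by
    intro n
    have := intervalIntegral.norm_integral_le_of_norm_le_const
      (a := (0 : ℝ)) (b := 1) (fun t ht => hbd n t (hIoc t ht))
    simpa using this
  have hqy : ∀ n (y : E), q n (fun _ => y) = ∫ t in (0 : ℝ)..1, p n (fun _ => D t y) := by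
    intro n y
    have h1 := (ContinuousMultilinearMap.apply ℝ (fun _ : Fin n => E) ℝ
      (fun _ => y)).intervalIntegral_comp_comm ((hcont n).intervalIntegrable (μ := MeasureTheory.volume) 0 1)
    exact h1.symm
  refine ⟨q, (s / K : NNReal), ⟨?_, ?_, ?_⟩⟩
  · refine q.le_radius_of_summable_norm (Summable.of_nonneg_of_le (fun n => by positivity)
      (fun n => ?_) hsum)
    calc ‖q n‖ * ((s / K : NNReal) : ℝ) ^ n ≤ ‖p n‖ * (K : ℝ) ^ n * ((s / K : NNReal) : ℝ) ^ n := by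
          gcongr; exact hq n
      _ = ‖p n‖ * (s : ℝ) ^ n := by
          rw [mul_assoc, ← mul_pow, NNReal.coe_div, mul_div_cancel₀]
          exact_mod_cast hK0.ne'
  · exact_mod_cast div_pos hs0 hK0
  · intro y hy
    have hy' : (K : ℝ) * ‖y‖ < s := by
      have : ‖y‖ < ((s / K : NNReal) : ℝ) := by
        simpa [Metric.eball_coe] using hy
      rw [NNReal.coe_div, lt_div_iff₀ (by exact_mod_cast hK0)] at this
      linarith
    simp only [zero_add, hqy]
    have hDy : ∀ t ∈ Set.Icc (0 : ℝ) 1, ‖D t y‖ ≤ K * ‖y‖ := fun t ht =>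
      (D t).le_of_opNorm_le (hK t ht) y
    have hDc : Continuous fun t => D t y := hD.clm_apply continuous_const
    refine intervalIntegral.hasSum_integral_of_dominated_convergence
      (fun n _ => ‖p n‖ * (s : ℝ) ^ n) ?_ ?_ ?_ ?_ ?_
    · intro n
      exact ((p n).cont.comp (continuous_pi fun _ => hDc)).aestronglyMeasurable
    · intro n
      refine Eventually.of_forall fun t ht => ?_
      refine ((p n).le_opNorm _).trans ?_
      gcongr
      simpa using pow_le_pow_left₀ (norm_nonneg _) ((hDy t (hIoc t ht)).trans hy'.le) n
    · exact Eventually.of_forall fun t _ => hsum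
    · exact intervalIntegrable_const
    · refine Eventually.of_forall fun t ht => ?_
      have := hp.hasSum (y := D t y) (by
        refine Metric.eball_subset_eball hsr.le ?_
        simpa [Metric.eball_coe] using (hDy t (hIoc t ht)).trans_lt hy')
      simpa using this

/-- Division by a linear form `ℓ`, with remainder the value at `y - ℓ y • e`; when `ℓ e = 1` that
point is the projection of `y` to the kernel of `ℓ` along `e`. The quotient is the integral of the
derivative in the direction `e` along the segment joining the two points. -/
lemma hadamard {ℓ : E →L[ℝ] ℝ} {e : E} {f : E → ℝ} (hf : AnalyticAt ℝ f 0) :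
    ∃ q : E → ℝ, AnalyticAt ℝ q 0 ∧ ∀ᶠ y in 𝓝 0, f y = f (y - ℓ y • e) + ℓ y * q y := by
  let D : ℝ → E →L[ℝ] E := fun t => ContinuousLinearMap.id ℝ E - (1 - t) • ℓ.smulRight e
  have hD : Continuous D := by fun_prop
  have hDa : ∀ t y, D t y = y - ((1 - t) * ℓ y) • e := by
    intro t y; simp [D, mul_smul]
  let h : E → ℝ := fun y => fderiv ℝ f y e
  have hh : AnalyticAt ℝ h 0 :=
    ((ContinuousLinearMap.apply ℝ ℝ e).analyticAt _).comp hf.fderiv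
  refine ⟨_, analyticAt_integral_comp_linear hh hD, ?_⟩
  obtain ⟨ε, hε, hball⟩ := Metric.eventually_nhds_iff.1
    (hf.eventually_analyticAt.and hh.eventually_analyticAt)
  obtain ⟨K, hK⟩ := (isCompact_Icc (a := (0 : ℝ)) (b := 1)).exists_bound_of_continuousOn
      hD.continuousOn
  have hK0 : 0 ≤ K := (norm_nonneg _).trans (hK 0 (by simp))
  rw [Metric.eventually_nhds_iff]
  refine ⟨ε / (K + 1), by positivity, fun y hy => ?_⟩
  rw [dist_zero_right, lt_div_iff₀ (by positivity)] at hy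
  have hmem : ∀ t ∈ Set.Icc (0 : ℝ) 1, dist (D t y) 0 < ε := by
    intro t ht
    rw [dist_zero_right]
    refine ((D t).le_of_opNorm_le (hK t ht) y).trans_lt ?_
    nlinarith [norm_nonneg y]
  have hder : ∀ t ∈ Set.uIcc (0 : ℝ) 1,
      HasDerivAt (fun t => f (D t y)) (ℓ y * h (D t y)) t := by
    intro t ht
    rw [Set.uIcc_of_le zero_le_one] at ht
    have h1 : HasDerivAt (fun t => D t y) (ℓ y • e) t := by
      simp only [hDa]
      have : HasDerivAt (fun t : ℝ => y - ((1 - t) * ℓ y) • e) (-((-1 * ℓ y) • e)) t :=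
        ((((hasDerivAt_id t).const_sub 1).mul_const (ℓ y)).smul_const e).const_sub y
      simpa using this
    have h2 := (hball (hmem t ht)).1.differentiableAt.hasFDerivAt.comp_hasDerivAt t h1
    have h3 : fderiv ℝ f (D t y) (ℓ y • e) = ℓ y * h (D t y) := by simp [h]
    rw [h3] at h2
    exact h2
  have hcont : ContinuousOn (fun t => ℓ y * h (D t y)) (Set.uIcc 0 1) := by
    intro t ht
    rw [Set.uIcc_of_le zero_le_one] at ht
    have : ContinuousAt (fun t => h (D t y)) t :=
      ContinuousAt.comp (f := fun t => D t y) (hball (hmem t ht)).2.continuousAt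
        (hD.clm_apply continuous_const).continuousAt
    exact (continuousAt_const.mul this).continuousWithinAt
  have := intervalIntegral.integral_eq_sub_of_hasDerivAt hder hcont.intervalIntegrable
  rw [intervalIntegral.integral_const_mul] at this
  rw [this]
  simp [hDa]

end Hadamard

/-! ### Germs of analytic functions form a domain -/

section Germ
variable {E : Type*} [NormedAddCommGroup E] [NormedSpace ℝ E]

lemma germ_mul_eq_zero {f g : E → ℝ} (hf : AnalyticAt ℝ f 0) (hg : AnalyticAt ℝ g 0)
    (h : ∀ᶠ y in 𝓝 (0 : E), f y * g y = 0) :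
    (∀ᶠ y in 𝓝 (0 : E), f y = 0) ∨ ∀ᶠ y in 𝓝 (0 : E), g y = 0 := by
  obtain ⟨r, hr, hball⟩ := Metric.eventually_nhds_iff_ball.1
    ((hf.eventually_analyticAt.and hg.eventually_analyticAt).and h)
  by_cases hz : ∀ y ∈ Metric.ball (0 : E) r, f y = 0
  · exact Or.inl (Filter.mem_of_superset (Metric.ball_mem_nhds _ hr) hz)
  · right
    push Not at hz
    obtain ⟨p, hp, hfp⟩ := hz
    have hg' : AnalyticOnNhd ℝ g (Metric.ball 0 r) := fun y hy => (hball y hy).1.2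
    have hgp : g =ᶠ[𝓝 p] 0 := by
      filter_upwards [(hball p hp).1.1.continuousAt.eventually_ne hfp,
        Metric.isOpen_ball.mem_nhds hp] with y hy hyb
      exact (mul_eq_zero.1 (hball y hyb).2).resolve_left hy
    have := hg'.eqOn_zero_of_preconnected_of_eventuallyEq_zero
      (convex_ball 0 r).isPreconnected hp hgp
    exact Filter.mem_of_superset (Metric.ball_mem_nhds _ hr) this

lemma germ_prod_ne_zero {κ : Type*} (s : Finset κ) {f : κ → E → ℝ}
    (hf : ∀ k ∈ s, AnalyticAt ℝ (f k) 0) (h : ∀ k ∈ s, ¬ ∀ᶠ y in 𝓝 (0 : E), f k y = 0) :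
    ¬ ∀ᶠ y in 𝓝 (0 : E), ∏ k ∈ s, f k y = 0 := by
  classical
  induction s using Finset.induction_on with
  | empty => simpa using (inferInstance : (𝓝 (0 : E)).NeBot).ne
  | insert a s ha ih =>
    intro h0
    simp only [Finset.prod_insert ha] at h0
    have h1 : AnalyticAt ℝ (fun y => ∏ k ∈ s, f k y) 0 :=
      Finset.analyticAt_fun_prod _ fun k hk => hf k (Finset.mem_insert_of_mem hk)
    rcases germ_mul_eq_zero (hf a (Finset.mem_insert_self _ _)) h1 h0 with h2 | h2
    · exact h a (Finset.mem_insert_self _ _) h2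
    · exact ih (fun k hk => hf k (Finset.mem_insert_of_mem hk))
        (fun k hk => h k (Finset.mem_insert_of_mem hk)) h2

end Germ

/-! ### Monomials times units -/

section Mono
variable {ι : Type*} [Fintype ι]

/-- The monomial `x ^ α`. -/
def mono (α : ι → ℕ) (x : ι → ℝ) : ℝ := ∏ i, x i ^ α i

lemma mono_add (α β : ι → ℕ) (x : ι → ℝ) : mono (α + β) x = mono α x * mono β x := by
  simp [mono, pow_add, Finset.prod_mul_distrib]

lemma mono_zero (x : ι → ℝ) : mono 0 x = 1 := by simp [mono]

lemma mono_nsmul (k : ℕ) (α : ι → ℕ) (x : ι → ℝ) : mono (k • α) x = mono α x ^ k := by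
  simp [mono, ← Finset.prod_pow, pow_mul, mul_comm k]

lemma mono_single [DecidableEq ι] (i : ι) (x : ι → ℝ) : mono (Pi.single i 1) x = x i := by
  rw [mono, Finset.prod_eq_single i]
  · simp
  · intro j _ hj; simp [hj]
  · simp

lemma mono_at_zero {α : ι → ℕ} (h : α ≠ 0) : mono α (0 : ι → ℝ) = 0 := by
  obtain ⟨i, hi⟩ := Function.ne_iff.1 h
  exact Finset.prod_eq_zero (Finset.mem_univ i) (by simpa using hi)

lemma mono_eq_mul_of_pos [DecidableEq ι] {α : ι → ℕ} {i : ι} (h : 0 < α i) (x : ι → ℝ) :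
    mono α x = x i * mono (α - Pi.single i 1) x := by
  have : α = Pi.single i 1 + (α - Pi.single i 1) := by
    ext j
    by_cases hj : j = i
    · subst hj; simp; omega
    · simp [hj]
  conv_lhs => rw [this]
  rw [mono_add, mono_single]

lemma sum_sub_single_lt [DecidableEq ι] {α : ι → ℕ} {i : ι} (h : 0 < α i) :
    ∑ j, (α - Pi.single i 1 : ι → ℕ) j < ∑ j, α j := by
  refine Finset.sum_lt_sum (fun j _ => by simp) ⟨i, Finset.mem_univ _, ?_⟩
  simp; omega

lemma analyticAt_mono (α : ι → ℕ) {E : Type*} [NormedAddCommGroup E] [NormedSpace ℝ E]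
    {c : ι → E → ℝ} {y : E} (hc : ∀ i, AnalyticAt ℝ (c i) y) :
    AnalyticAt ℝ (fun y => mono α (fun i => c i y)) y :=
  Finset.analyticAt_fun_prod _ fun i _ => (hc i).pow _

variable {E : Type*} [NormedAddCommGroup E] [NormedSpace ℝ E]

/-- The germ of `F` at `0` is a monomial in the coordinate functions `c i` times an analytic
unit. -/
def Mon (c : ι → E → ℝ) (F : E → ℝ) : Prop :=
  ∃ (α : ι → ℕ) (U : E → ℝ), AnalyticAt ℝ U 0 ∧ U 0 ≠ 0 ∧
    ∀ᶠ y in 𝓝 (0 : E), F y = mono α (fun i => c i y) * U y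

variable {c : ι → E → ℝ} {F G : E → ℝ}

lemma Mon.congr (h : Mon c F) (hFG : ∀ᶠ y in 𝓝 (0 : E), G y = F y) : Mon c G := by
  obtain ⟨α, U, h1, h2, h3⟩ := h
  exact ⟨α, U, h1, h2, (hFG.and h3).mono fun y hy => hy.1.trans hy.2⟩

lemma Mon.mul (hF : Mon c F) (hG : Mon c G) : Mon c (fun y => F y * G y) := by
  obtain ⟨α, U, h1, h2, h3⟩ := hF
  obtain ⟨β, V, k1, k2, k3⟩ := hG
  refine ⟨α + β, fun y => U y * V y, h1.mul k1, mul_ne_zero h2 k2, ?_⟩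
  filter_upwards [h3, k3] with y hy ky
  rw [hy, ky, mono_add]; ring

lemma Mon.unit (h : AnalyticAt ℝ F 0) (h0 : F 0 ≠ 0) : Mon c F :=
  ⟨0, F, h, h0, Eventually.of_forall fun y => by simp [mono_zero]⟩

lemma Mon.coord (i : ι) : Mon c (c i) := by
  classical
  exact ⟨Pi.single i 1, fun _ => 1, analyticAt_const, one_ne_zero,
    Eventually.of_forall fun y => by simp [mono_single]⟩

lemma Mon.pow (hF : Mon c F) (k : ℕ) : Mon c (fun y => F y ^ k) := by
  induction k with
  | zero => simpa using Mon.unit (c := c) (F := fun _ : E => (1 : ℝ)) analyticAt_const one_ne_zero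
  | succ k ih => simpa [pow_succ] using ih.mul hF

lemma Mon.prod {κ : Type*} (s : Finset κ) {f : κ → E → ℝ} (hf : ∀ k, Mon c (f k)) :
    Mon c (fun y => ∏ k ∈ s, f k y) := by
  classical
  induction s using Finset.induction_on with
  | empty => simpa using Mon.unit (c := c) (F := fun _ : E => (1 : ℝ)) analyticAt_const one_ne_zero
  | insert a s ha ih => simpa [Finset.prod_insert ha] using (hf a).mul ih

lemma Mon.not_zero {n : ℕ} {F : (Fin n → ℝ) → ℝ} (hF : Mon (fun i x => x i) F) :
    ¬ ∀ᶠ y in 𝓝 (0 : Fin n → ℝ), F y = 0 := by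
  obtain ⟨α, U, h1, h2, h3⟩ := hF
  intro h
  have h4 := (h.and (h3.and (h1.continuousAt.eventually_ne h2)))
  have ht : Tendsto (fun t : ℝ => (fun _ => t : Fin n → ℝ)) (𝓝[>] 0) (𝓝 0) :=
    (Continuous.tendsto (f := fun t : ℝ => (fun _ => t : Fin n → ℝ)) (by fun_prop) 0).mono_left
      nhdsWithin_le_nhds
  obtain ⟨t, ht, ht0⟩ := ((ht.eventually h4).and self_mem_nhdsWithin).exists
  have ht0 : 0 < t := ht0
  have : mono α (fun _ => t : Fin n → ℝ) * U (fun _ => t) = 0 := by rw [← ht.2.1, ht.1]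
  rcases mul_eq_zero.1 this with h | h
  · exact (Finset.prod_pos fun i _ => pow_pos ht0 _).ne' h
  · exact ht.2.2 h

/-- A substitution whose components are monomials times units preserves the monomial form. -/
lemma Mon.comp {n : ℕ} {b : (Fin n → ℝ) → ℝ} (hb : Mon (fun i x => x i) b)
    {φ : E → Fin n → ℝ} (hφ : AnalyticAt ℝ φ 0) (h0 : φ 0 = 0)
    (hm : ∀ i, Mon c (fun y => φ y i)) : Mon c (fun y => b (φ y)) := by
  obtain ⟨α, U, h1, h2, h3⟩ := hb
  have ht : Tendsto φ (𝓝 0) (𝓝 0) := by simpa [h0] using hφ.continuousAt.tendsto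
  have hU : Mon c (fun y => U (φ y)) :=
    Mon.unit (AnalyticAt.comp (by rwa [h0]) hφ) (by rwa [h0])
  exact ((Mon.prod Finset.univ fun i => (hm i).pow (α i)).mul hU).congr (ht.eventually h3)

end Mono

/-! ### Factors of monomials times units -/

section Factor
variable {n : ℕ}

/-- The induction, on the degree `s` of the monomial, behind `Mon.of_mul_left`. If `y j` divides
`g * h`, then one of `g`, `h` vanishes on the hyperplane `y j = 0` since germs there form a domain,
and `hadamard` divides that factor by `y j`. -/
lemma Mon.of_mul_aux (s : ℕ) : ∀ (α : Fin n → ℕ) (g h U : (Fin n → ℝ) → ℝ), ∑ i, α i = s →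
    AnalyticAt ℝ g 0 → AnalyticAt ℝ h 0 → AnalyticAt ℝ U 0 → U 0 ≠ 0 →
    (∀ᶠ y in 𝓝 0, g y * h y = mono α y * U y) → Mon (fun i x => x i) g := by
  induction s using Nat.strong_induction_on with
  | _ s ih =>
  intro α g h U hs hg hh hU hU0 hgh
  by_cases hα : α = 0
  · have h0 := hgh.self_of_nhds
    rw [hα, mono_zero, one_mul] at h0
    exact Mon.unit hg (left_ne_zero_of_mul (h0 ▸ hU0))
  obtain ⟨j, hj⟩ := Function.ne_iff.1 hα
  have hj : 0 < α j := Nat.pos_of_ne_zero hj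
  have hlt := sum_sub_single_lt hj
  let ℓ : (Fin n → ℝ) →L[ℝ] ℝ := ContinuousLinearMap.proj j
  let e : Fin n → ℝ := Pi.single j 1
  let D : (Fin n → ℝ) →L[ℝ] (Fin n → ℝ) := ContinuousLinearMap.id ℝ _ - ℓ.smulRight e
  have hD : ∀ y, D y = y - ℓ y • e := fun y => by simp [D]
  have hDt : Tendsto D (𝓝 0) (𝓝 0) := by simpa using D.continuous.tendsto 0
  have hDj : ∀ y, D y j = 0 := fun y => by simp [hD, ℓ, e]
  have hDa : ∀ {k : (Fin n → ℝ) → ℝ}, AnalyticAt ℝ k 0 → AnalyticAt ℝ (fun y => k (D y)) 0 :=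
    fun hk => AnalyticAt.comp (by simpa using hk) (D.analyticAt 0)
  have hz : ∀ᶠ y in 𝓝 0, g (D y) * h (D y) = 0 := by
    filter_upwards [hDt.eventually hgh] with y hy
    rw [hy, mono_eq_mul_of_pos hj, hDj]; simp
  have hcoord : ¬ ∀ᶠ y in 𝓝 (0 : Fin n → ℝ), y j = 0 :=
    Mon.not_zero (F := fun y => y j) (Mon.coord (c := fun i (x : Fin n → ℝ) => x i) j)
  have hla : AnalyticAt ℝ (fun y : Fin n → ℝ => y j) 0 := ℓ.analyticAt 0
  have hma : AnalyticAt ℝ (fun y => mono (α - Pi.single j 1) y * U y) 0 :=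
    (analyticAt_mono _ fun i =>
      (ContinuousLinearMap.proj (R := ℝ) (φ := fun _ : Fin n => ℝ) i).analyticAt 0).mul hU
  -- cancelling the coordinate `y j` from the factorization
  have key : ∀ k l : (Fin n → ℝ) → ℝ, AnalyticAt ℝ k 0 → AnalyticAt ℝ l 0 →
      (∀ᶠ y in 𝓝 0, y j * (k y * l y) = mono α y * U y) →
      ∀ᶠ y in 𝓝 0, k y * l y = mono (α - Pi.single j 1) y * U y := by
    intro k l hk hl hkl
    have h1 : ∀ᶠ y in 𝓝 (0 : Fin n → ℝ),
        y j * (k y * l y - mono (α - Pi.single j 1) y * U y) = 0 := by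
      filter_upwards [hkl] with y hy
      rw [mul_sub, hy, mono_eq_mul_of_pos hj]; ring
    refine ((germ_mul_eq_zero hla ((hk.mul hl).sub hma) h1).resolve_left hcoord).mono
      fun y hy => sub_eq_zero.1 hy
  rcases germ_mul_eq_zero (hDa hg) (hDa hh) hz with h0 | h0
  · obtain ⟨q, hq, hgq⟩ := hadamard (ℓ := ℓ) (e := e) hg
    have hgq : ∀ᶠ y in 𝓝 0, g y = y j * q y := by
      filter_upwards [hgq, h0] with y hy h0
      rw [hy, ← hD, h0, zero_add]; rfl
    have : Mon (fun i x => x i) q := by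
      refine ih _ (hs ▸ hlt) _ q h U rfl hq hh hU hU0 (key q h hq hh ?_)
      filter_upwards [hgq, hgh] with y h1 h2
      rw [← h2, h1, mul_assoc]
    exact ((Mon.coord (c := fun i (x : Fin n → ℝ) => x i) j).mul this).congr hgq
  · obtain ⟨q, hq, hgq⟩ := hadamard (ℓ := ℓ) (e := e) hh
    refine ih _ (hs ▸ hlt) _ g q U rfl hg hq hU hU0 (key g q hg hq ?_)
    filter_upwards [hgq, h0, hgh] with y hy h0 h2
    rw [← h2, hy, ← hD, h0, zero_add]
    change y j * (g y * q y) = g y * (y j * q y); ring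

/-- Unique factorization for monomials: a factor of a monomial times a unit is a monomial times a
unit. -/
lemma Mon.of_mul_left {g h : (Fin n → ℝ) → ℝ} (hg : AnalyticAt ℝ g 0) (hh : AnalyticAt ℝ h 0)
    (H : Mon (fun i x => x i) (fun y => g y * h y)) : Mon (fun i x => x i) g := by
  obtain ⟨α, U, h1, h2, h3⟩ := H
  exact Mon.of_mul_aux _ α g h U rfl hg hh h1 h2 h3

lemma Mon.of_prod {κ : Type*} (s : Finset κ) {f : κ → (Fin n → ℝ) → ℝ}
    (hf : ∀ k, AnalyticAt ℝ (f k) 0)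
    (H : Mon (fun i x => x i) (fun y => ∏ k ∈ s, f k y)) {k : κ} (hk : k ∈ s) :
    Mon (fun i x => x i) (f k) := by
  classical
  refine Mon.of_mul_left (hf k) (h := fun y => ∏ l ∈ s.erase k, f l y)
    (Finset.analyticAt_fun_prod _ fun l _ => hf l) ?_
  exact H.congr (Eventually.of_forall fun y => Finset.mul_prod_erase s (fun l => f l y) hk)

end Factor

/-! ### Covers of a germ -/

section Cover
variable {E E' : Type*} [NormedAddCommGroup E'] [NormedSpace ℝ E']
  [NormedAddCommGroup E] [NormedSpace ℝ E]

/-- A cover of the germ of `E'` at `0`: a family of analytic germs `(E, 0) → (E', 0)`, possibly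
infinite, such that for every choice of neighbourhoods `W φ` of `0`, finitely many of the images
`φ (W φ)` cover a neighbourhood of `0`. -/
def Cov (Φ : Set (E → E')) : Prop :=
  (∀ φ ∈ Φ, AnalyticAt ℝ φ 0 ∧ φ 0 = 0) ∧
  ∀ W : (E → E') → Set E, (∀ φ ∈ Φ, W φ ∈ 𝓝 0) →
    ∃ T : Finset (E → E'), (∀ φ ∈ T, φ ∈ Φ) ∧ ∀ᶠ y in 𝓝 (0 : E'), ∃ φ ∈ T, ∃ x ∈ W φ, φ x = y

/-- The germ of `F` at `0` acquires the property `P` after pulling back along the members of some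
cover. -/
def Mz (P : (E → ℝ) → Prop) (F : E → ℝ) : Prop :=
  ∃ Φ : Set (E → E), Cov Φ ∧ ∀ φ ∈ Φ, P (fun y => F (φ y))

lemma Cov.tendsto {Φ : Set (E → E')} (h : Cov Φ) {φ : E → E'} (hφ : φ ∈ Φ) :
    Tendsto φ (𝓝 0) (𝓝 0) := by
  have := (h.1 φ hφ).1.continuousAt.tendsto
  rwa [(h.1 φ hφ).2] at this

/-- A finite family is a cover as soon as every `y` near `0` has, under some member of the family, a
preimage `ψ y` which tends to `0` with `y`. -/
lemma Cov.of_finite {Φ : Set (E → E')} (hΦ : Φ.Finite)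
    (ha : ∀ φ ∈ Φ, AnalyticAt ℝ φ 0 ∧ φ 0 = 0) {ψ : E' → E} (hψ : Tendsto ψ (𝓝 0) (𝓝 0))
    (h : ∀ᶠ y in 𝓝 0, ∃ φ ∈ Φ, φ (ψ y) = y) : Cov Φ := by
  refine ⟨ha, fun W hW => ⟨hΦ.toFinset, by simp, ?_⟩⟩
  have h1 : ∀ᶠ y in 𝓝 (0 : E'), ∀ φ ∈ Φ, ψ y ∈ W φ := by
    rw [Filter.eventually_all_finite hΦ]
    exact fun φ hφ => hψ (hW φ hφ)
  filter_upwards [h, h1] with y ⟨φ, hφ, hy⟩ h1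
  exact ⟨φ, by simpa using hφ, ψ y, h1 φ hφ, hy⟩

lemma Cov.singleton {φ : E → E'} (ha : AnalyticAt ℝ φ 0) (h0 : φ 0 = 0) {ψ : E' → E}
    (hψ : Tendsto ψ (𝓝 0) (𝓝 0)) (h : ∀ᶠ y in 𝓝 0, φ (ψ y) = y) : Cov {φ} :=
  Cov.of_finite (Set.finite_singleton _) (by rintro _ rfl; exact ⟨ha, h0⟩) hψ (by simpa using h)

lemma Mz.congr {P : (E → ℝ) → Prop}
    (hP : ∀ F G : E → ℝ, P F → (∀ᶠ y in 𝓝 (0 : E), G y = F y) → P G)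
    {F G : E → ℝ} (h : Mz P F) (hFG : ∀ᶠ y in 𝓝 (0 : E), G y = F y) : Mz P G := by
  obtain ⟨Φ, h1, h2⟩ := h
  exact ⟨Φ, h1, fun φ hφ => hP _ _ (h2 φ hφ) ((h1.tendsto hφ).eventually hFG)⟩

lemma Mz.of_self {P : (E → ℝ) → Prop} {F : E → ℝ} (h : P F) : Mz P F :=
  ⟨{id}, Cov.singleton analyticAt_id rfl tendsto_id (by simp), by rintro _ rfl; exact h⟩

/-- Covers compose, so property `P` may be checked after pulling back along a cover. -/
lemma Mz.of_cov {P : (E → ℝ) → Prop} {F : E → ℝ} {Φ : Set (E → E)} (hΦ : Cov Φ)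
    (h : ∀ φ ∈ Φ, Mz P (fun y => F (φ y))) : Mz P F := by
  classical
  choose! Ψ hΨ hP using h
  refine ⟨{χ | ∃ φ ∈ Φ, ∃ ψ ∈ Ψ φ, χ = fun y => φ (ψ y)}, ⟨?_, ?_⟩, ?_⟩
  · rintro _ ⟨φ, hφ, ψ, hψ, rfl⟩
    have h1 := hΦ.1 φ hφ
    have h2 := (hΨ φ hφ).1 ψ hψ
    exact ⟨AnalyticAt.comp (by rw [h2.2]; exact h1.1) h2.1, by simp only [h2.2, h1.2]⟩
  · intro W hW
    have h1 : ∀ φ ∈ Φ, ∃ T : Finset (E → E), (∀ ψ ∈ T, ψ ∈ Ψ φ) ∧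
        ∀ᶠ y in 𝓝 (0 : E), ∃ ψ ∈ T, ∃ x ∈ W (fun y => φ (ψ y)), ψ x = y := fun φ hφ =>
      (hΨ φ hφ).2 (fun ψ => W (fun y => φ (ψ y))) fun ψ hψ => hW _ ⟨φ, hφ, ψ, hψ, rfl⟩
    choose! T hT hT' using h1
    obtain ⟨S, hS, hS'⟩ := hΦ.2
      (fun φ => {y | ∃ ψ ∈ T φ, ∃ x ∈ W (fun y => φ (ψ y)), ψ x = y}) fun φ hφ => hT' φ hφ
    refine ⟨S.biUnion fun φ => (T φ).image fun ψ y => φ (ψ y), ?_, ?_⟩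
    · intro χ hχ
      simp only [Finset.mem_biUnion, Finset.mem_image] at hχ
      obtain ⟨φ, hφ, ψ, hψ, rfl⟩ := hχ
      exact ⟨φ, hS φ hφ, ψ, hT φ (hS φ hφ) ψ hψ, rfl⟩
    · filter_upwards [hS'] with y ⟨φ, hφ, z, ⟨ψ, hψ, x, hx, hxz⟩, hzy⟩
      refine ⟨fun y => φ (ψ y), ?_, x, hx, by simp [hxz, hzy]⟩
      simp only [Finset.mem_biUnion, Finset.mem_image]
      exact ⟨φ, hφ, ψ, hψ, rfl⟩
  · rintro _ ⟨φ, hφ, ψ, hψ, rfl⟩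
    exact hP φ hφ ψ hψ

/-- A cover of the germ of `E` gives a cover of the germ of `E × ℝ`. -/
lemma Cov.prod {Φ : Set (E → E')} (h : Cov Φ) :
    Cov ((fun (φ : E → E') (y : E × ℝ) => (φ y.1, y.2)) '' Φ) := by
  classical
  refine ⟨?_, ?_⟩
  · rintro _ ⟨φ, hφ, rfl⟩
    have h1 := h.1 φ hφ
    refine ⟨AnalyticAt.prod (AnalyticAt.comp (g := φ) (f := Prod.fst) h1.1 analyticAt_fst)
      analyticAt_snd, by simp [h1.2]⟩
  · intro W hW
    have h1 : ∀ φ ∈ Φ, ∃ A ∈ 𝓝 (0 : E), ∃ B ∈ 𝓝 (0 : ℝ),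
        A ×ˢ B ⊆ W (fun y : E × ℝ => (φ y.1, y.2)) := fun φ hφ => by
      have := hW _ ⟨φ, hφ, rfl⟩
      rw [Prod.zero_eq_mk] at this
      exact mem_nhds_prod_iff.1 this
    choose! A hA B hB hAB using h1
    obtain ⟨T, hT, hT'⟩ := h.2 A hA
    refine ⟨T.image fun φ (y : E × ℝ) => (φ y.1, y.2), ?_, ?_⟩
    · intro χ hχ
      obtain ⟨φ, hφ, rfl⟩ := Finset.mem_image.1 hχ
      exact ⟨φ, hT φ hφ, rfl⟩
    · have h2 : ∀ᶠ z in 𝓝 (0 : ℝ), ∀ φ ∈ T, z ∈ B φ := by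
        rw [Filter.eventually_all_finset]
        exact fun φ hφ => hB φ (hT φ hφ)
      have h3 := hT'.prod_mk h2
      rw [← nhds_prod_eq, ← Prod.zero_eq_mk] at h3
      filter_upwards [h3] with y ⟨⟨φ, hφ, x, hx, hxy⟩, hy⟩
      exact ⟨_, Finset.mem_image_of_mem _ hφ, (x, y.2),
        hAB φ (hT φ hφ) ⟨hx, hy φ hφ⟩, by simp [hxy]⟩

end Cover

/-! ### Power substitutions and blow-ups -/

section Covers
variable {n : ℕ}

lemma analyticAt_coord (i : Fin n) (y : Fin n → ℝ) :
    AnalyticAt ℝ (fun x : Fin n → ℝ => x i) y :=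
  (ContinuousLinearMap.proj (R := ℝ) (φ := fun _ : Fin n => ℝ) i).analyticAt y

/-- The power substitutions `u ↦ (± u i ^ D)`, with all choices of signs, form a cover. -/
lemma Cov.powers {D : ℕ} (hD : D ≠ 0) :
    Cov {φ : (Fin n → ℝ) → Fin n → ℝ | ∃ ε : Fin n → ℝ, (∀ i, ε i ∈ ({1, -1} : Set ℝ)) ∧
      φ = fun u i => ε i * u i ^ D} := by
  refine Cov.of_finite ?_ ?_ (ψ := fun y i => |y i| ^ (1 / (D : ℝ))) ?_ ?_
  · refine ((Set.Finite.pi' fun _ : Fin n => Set.toFinite ({1, -1} : Set ℝ)).image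
      fun (ε : Fin n → ℝ) (u : Fin n → ℝ) i => ε i * u i ^ D).subset ?_
    rintro _ ⟨ε, hε, rfl⟩
    exact ⟨ε, hε, rfl⟩
  · rintro _ ⟨ε, hε, rfl⟩
    refine ⟨AnalyticAt.pi fun i => analyticAt_const.mul ((analyticAt_coord i 0).pow D), ?_⟩
    ext i; simp [hD]
  · have : Continuous fun (y : Fin n → ℝ) i => |y i| ^ (1 / (D : ℝ)) :=
      continuous_pi fun i => ((continuous_apply i).abs).rpow_const fun _ => Or.inr (by positivity)
    have h := this.tendsto 0
    have h0 : (fun i => |(0 : Fin n → ℝ) i| ^ (1 / (D : ℝ))) = (0 : Fin n → ℝ) := by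
      ext i
      simp [Real.zero_rpow, hD]
    rwa [h0] at h
  · refine Eventually.of_forall fun y => ⟨_, ⟨fun i => if 0 ≤ y i then 1 else -1, ?_, rfl⟩, ?_⟩
    · intro i; by_cases h : 0 ≤ y i <;> simp [h]
    · ext i
      have : (|y i| ^ (1 / (D : ℝ))) ^ D = |y i| := by
        rw [← Real.rpow_natCast, ← Real.rpow_mul (abs_nonneg _), one_div, inv_mul_cancel₀,
          Real.rpow_one]
        exact_mod_cast hD
      simp only [this]
      by_cases h : 0 ≤ y i
      · simp [h, abs_of_nonneg]
      · simp [h, abs_of_neg (not_le.1 h)]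

/-- The chart `z = x j * (z' + w)` of the blow-up of `{x j = z = 0}`, centred at the slope `w`. -/
def chartA (j : Fin n) (w : ℝ) (y : (Fin n → ℝ) × ℝ) : (Fin n → ℝ) × ℝ := (y.1, y.1 j * (y.2 + w))

/-- The chart `x j = z * x' j` of the blow-up of `{x j = z = 0}` around the vertical direction. -/
def chartB (j : Fin n) (y : (Fin n → ℝ) × ℝ) : (Fin n → ℝ) × ℝ :=
  (Function.update y.1 j (y.2 * y.1 j), y.2)

lemma analyticAt_fst_coord (i : Fin n) (y : (Fin n → ℝ) × ℝ) :
    AnalyticAt ℝ (fun x : (Fin n → ℝ) × ℝ => x.1 i) y :=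
  AnalyticAt.comp (g := fun x : Fin n → ℝ => x i) (analyticAt_coord i _) analyticAt_fst

lemma analyticAt_chartA (j : Fin n) (w : ℝ) (y : (Fin n → ℝ) × ℝ) :
    AnalyticAt ℝ (chartA j w) y :=
  analyticAt_fst.prod ((analyticAt_fst_coord j y).mul (analyticAt_snd.add analyticAt_const))

lemma analyticAt_chartB (j : Fin n) (y : (Fin n → ℝ) × ℝ) :
    AnalyticAt ℝ (chartB j) y := by
  refine AnalyticAt.prod (AnalyticAt.pi fun i => ?_) analyticAt_snd
  by_cases h : i = j
  · subst h
    simp only [Function.update_self]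
    exact analyticAt_snd.mul (analyticAt_fst_coord i y)
  · simpa [h] using analyticAt_fst_coord i y

lemma chartA_zero (j : Fin n) (w : ℝ) : chartA j w 0 = 0 := by simp [chartA]

lemma chartB_zero (j : Fin n) : chartB j 0 = 0 := by simp [chartB]

/-- The charts of the blow-up of `{x j = z = 0}` form a cover. Where `|x j| < δ |z|`, the vertical
chart applies; elsewhere the slope `z / x j` lies in the compact interval `[-δ⁻¹, δ⁻¹]`, which
finitely many of the charts `chartA j w` take care of. -/
lemma Cov.blowup (j : Fin n) : Cov (insert (chartB j) (Set.range (chartA j))) := by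
  classical
  refine ⟨?_, ?_⟩
  · rintro _ (rfl | ⟨w, rfl⟩)
    · exact ⟨analyticAt_chartB j 0, chartB_zero j⟩
    · exact ⟨analyticAt_chartA j w 0, chartA_zero j w⟩
  intro W hW
  have key : ∀ φ ∈ insert (chartB j) (Set.range (chartA j)), ∃ δ > 0,
      ∀ y : (Fin n → ℝ) × ℝ, ‖y.1‖ < δ → |y.2| < δ → y ∈ W φ := by
    intro φ hφ
    obtain ⟨δ, hδ, h⟩ := Metric.mem_nhds_iff.1 (hW φ hφ)
    refine ⟨δ, hδ, fun y h1 h2 => h ?_⟩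
    rw [mem_ball_zero_iff, Prod.norm_def]
    exact max_lt h1 h2
  obtain ⟨δ, hδ, hB⟩ := key (chartB j) (Set.mem_insert _ _)
  have hA : ∀ w : ℝ, ∃ δ > 0,
      ∀ y : (Fin n → ℝ) × ℝ, ‖y.1‖ < δ → |y.2| < δ → y ∈ W (chartA j w) :=
    fun w => key _ (Set.mem_insert_of_mem _ ⟨w, rfl⟩)
  choose η hη hA using hA
  obtain ⟨t, ht⟩ := (isCompact_Icc (a := -δ⁻¹) (b := δ⁻¹)).elim_finite_subcover
    (fun w => Metric.ball w (η w)) (fun _ => Metric.isOpen_ball)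
    (fun w _ => Set.mem_iUnion.2 ⟨w, Metric.mem_ball_self (hη w)⟩)
  refine ⟨insert (chartB j) (t.image (chartA j)), ?_, ?_⟩
  · intro φ hφ
    rw [Finset.mem_insert, Finset.mem_image] at hφ
    rcases hφ with rfl | ⟨w, -, rfl⟩
    · exact Set.mem_insert _ _
    · exact Set.mem_insert_of_mem _ ⟨w, rfl⟩
  have h1 : ∀ ρ : ℝ, 0 < ρ → ∀ᶠ y in 𝓝 (0 : (Fin n → ℝ) × ℝ), ‖y‖ < ρ := fun ρ hρ => by
    filter_upwards [Metric.ball_mem_nhds _ hρ] with y hy using mem_ball_zero_iff.1 hy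
  have h2 : ∀ᶠ y in 𝓝 (0 : (Fin n → ℝ) × ℝ), ∀ w ∈ t, ‖y‖ < η w := by
    rw [Filter.eventually_all_finset]
    exact fun w _ => h1 _ (hη w)
  filter_upwards [h1 δ hδ, h2] with y hy hyt
  have hy1 : ‖y.1‖ ≤ ‖y‖ := norm_fst_le y
  have hy2 : |y.2| ≤ ‖y‖ := norm_snd_le y
  by_cases hc : |y.1 j| < δ * |y.2|
  · have hz : 0 < |y.2| := by
      rcases (abs_nonneg y.2).eq_or_lt with h | h
      · rw [← h, mul_zero] at hc; exact absurd hc (not_lt.2 (abs_nonneg _))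
      · exact h
    have hz' : y.2 ≠ 0 := abs_pos.1 hz
    refine ⟨_, Finset.mem_insert_self _ _, (Function.update y.1 j (y.1 j / y.2), y.2),
      hB _ ?_ (hy2.trans_lt hy), ?_⟩
    · rw [pi_norm_lt_iff hδ]
      intro i
      by_cases h : i = j
      · subst h
        simpa [abs_div, div_lt_iff₀ hz] using hc
      · simpa [h] using (norm_le_pi_norm y.1 i).trans_lt (hy1.trans_lt hy)
    · simp [chartB, mul_div_cancel₀ _ hz']
  · rw [not_lt] at hc
    have hw : y.2 / y.1 j ∈ Set.Icc (-δ⁻¹) δ⁻¹ := by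
      rw [Set.mem_Icc, ← abs_le, abs_div]
      refine div_le_of_le_mul₀ (abs_nonneg _) (by positivity) ?_
      rw [inv_mul_eq_div, le_div_iff₀ hδ]; linarith
    obtain ⟨w, hwt, hw'⟩ : ∃ w ∈ t, y.2 / y.1 j ∈ Metric.ball w (η w) := by
      simpa using ht hw
    refine ⟨chartA j w, Finset.mem_insert_of_mem (Finset.mem_image_of_mem _ hwt),
      (y.1, y.2 / y.1 j - w), hA w _ (hy1.trans_lt (hyt w hwt)) ?_, ?_⟩
    · simpa [Real.dist_eq] using hw'
    · have : y.1 j * (y.2 / y.1 j) = y.2 := by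
        by_cases h : y.1 j = 0
        · rw [h, abs_zero] at hc
          have : |y.2| = 0 := le_antisymm (by nlinarith [abs_nonneg y.2]) (abs_nonneg _)
          rw [h, abs_eq_zero.1 this]; simp
        · exact mul_div_cancel₀ _ h
      simp [chartA, this]

end Covers

/-! ### Weighted polynomials: blow-ups lower the order -/

section Gamma

/-- The coordinate functions of `ℝⁿ × ℝ`, the last variable coming first. -/
def pcoord (n : ℕ) (i : Fin (n + 1)) (y : (Fin n → ℝ) × ℝ) : ℝ :=
  (Fin.cons y.2 y.1 : Fin (n + 1) → ℝ) i

/-- Monomialization of `b(x) f(x, z)` near the origin of `ℝⁿ × ℝ`, where `f(0, ·)` has order `d`. -/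
def MonOrder (n d : ℕ) : Prop :=
  ∀ (b : (Fin n → ℝ) → ℝ) (f : (Fin n → ℝ) × ℝ → ℝ), AnalyticAt ℝ b 0 →
    (¬ ∀ᶠ x in 𝓝 0, b x = 0) → AnalyticAt ℝ f 0 →
    analyticOrderAt (fun z : ℝ => f (0, z)) 0 = d → Mz (Mon (pcoord n)) (fun y => b y.1 * f y)

variable {n : ℕ}

lemma Mon.snd : Mon (pcoord n) fun y => y.2 := Mon.coord (c := pcoord n) 0

lemma Mon.fst (i : Fin n) : Mon (pcoord n) fun y => y.1 i := by
  have h := Mon.coord (c := pcoord n) i.succ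
  have h2 : pcoord n i.succ = fun y => y.1 i := by ext y; simp [pcoord]
  rwa [h2] at h

lemma Mon.analyticAt {F : (Fin n → ℝ) → ℝ} (h : Mon (fun i x => x i) F) : AnalyticAt ℝ F 0 := by
  obtain ⟨α, U, h1, h2, h3⟩ := h
  exact ((analyticAt_mono α fun i => analyticAt_coord i 0).mul h1).congr
    (h3.mono fun y hy => hy.symm)

/-- The monomial form when the second factor is already `z ^ d` times a unit: only the coefficient
`b`, a function of the first `n` variables, needs to be monomialized. -/
lemma monOrder_base (hM : ∀ f : (Fin n → ℝ) → ℝ, AnalyticAt ℝ f 0 → (¬ ∀ᶠ x in 𝓝 0, f x = 0) →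
      Mz (Mon fun i x => x i) f)
    {b : (Fin n → ℝ) → ℝ} (hb : AnalyticAt ℝ b 0) (hb0 : ¬ ∀ᶠ x in 𝓝 0, b x = 0)
    {u : (Fin n → ℝ) × ℝ → ℝ} (hu : AnalyticAt ℝ u 0) (hu0 : u 0 ≠ 0) (d : ℕ) :
    Mz (Mon (pcoord n)) (fun y => b y.1 * (y.2 ^ d * u y)) := by
  obtain ⟨Φ, hΦ, h⟩ := hM b hb hb0
  refine ⟨_, hΦ.prod, ?_⟩
  rintro _ ⟨φ, hφ, rfl⟩
  have h1 := hΦ.prod.1 _ ⟨φ, hφ, rfl⟩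
  refine Mon.mul (F := fun y : (Fin n → ℝ) × ℝ => b (φ y.1)) ?_ ((Mon.snd.pow d).mul ?_)
  · exact (h φ hφ).comp analyticAt_fst rfl Mon.fst
  · refine Mon.unit (AnalyticAt.comp (g := u) ?_ h1.1) ?_
    · rw [h1.2]; exact hu
    · have := h1.2
      rwa [this]

/-- A polynomial `∑ cᵢ wⁱ + u₀ wᵈ` without a term of degree `d - 1` vanishes to order `d` only at
`w = 0`, and only if it is `u₀ wᵈ`. -/
lemma order_lt_of_coeff {d : ℕ} (hd : 0 < d) (c : ℕ → ℝ) {u₀ w₀ : ℝ} (hu : u₀ ≠ 0)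
    (hc : c (d - 1) = 0) (h : w₀ ≠ 0 ∨ ∃ i < d, c i ≠ 0) :
    ∃ d' < d, analyticOrderAt
      (fun w => ∑ i ∈ Finset.range d, c i * (w + w₀) ^ i + (w + w₀) ^ d * u₀) 0 = (d' : ℕ) := by
  open Polynomial in
  let p : ℝ[X] := ∑ i ∈ Finset.range d, C (c i) * X ^ i + C u₀ * X ^ d
  have hpc : ∀ i < d, p.coeff i = c i := by
    intro i hi
    simp [p, Polynomial.coeff_X_pow, hi, hi.ne]
  have hpd : p.coeff d = u₀ := by
    simp [p, Polynomial.coeff_X_pow]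
  have hple : p.natDegree ≤ d := by
    refine Polynomial.natDegree_add_le_of_degree_le
      (Polynomial.natDegree_sum_le_of_forall_le _ _ fun i hi => ?_) (Polynomial.natDegree_C_mul_X_pow_le _ _)
    exact (Polynomial.natDegree_C_mul_X_pow_le _ _).trans (Finset.mem_range.1 hi).le
  have hpn : p.natDegree = d :=
    le_antisymm hple (Polynomial.le_natDegree_of_ne_zero (by rwa [hpd]))
  let q := p.comp (Polynomial.X + Polynomial.C w₀)
  have hqn : q.natDegree = d := by
    simp [q, Polynomial.natDegree_comp, hpn]
  have hq0 : q ≠ 0 := by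
    intro h0; rw [h0, Polynomial.natDegree_zero] at hqn; omega
  obtain ⟨r, hr, hdvd⟩ := Polynomial.exists_eq_pow_rootMultiplicity_mul_and_not_dvd q hq0 0
  set m := q.rootMultiplicity 0
  rw [Polynomial.C_0, sub_zero] at hr hdvd
  have hr0 : r ≠ 0 := by rintro rfl; simp at hdvd
  have hre : r.eval 0 ≠ 0 := by
    rw [Polynomial.X_dvd_iff, Polynomial.coeff_zero_eq_eval_zero] at hdvd
    exact hdvd
  have hdeg : m + r.natDegree = d := by
    rw [← hqn, hr, Polynomial.natDegree_mul (by simp) hr0, Polynomial.natDegree_X_pow]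
  refine ⟨m, lt_of_le_of_ne (by omega) fun hm => ?_, ?_⟩
  · have hrC : r = Polynomial.C (r.coeff 0) :=
      Polynomial.eq_C_of_natDegree_eq_zero (by omega)
    set a := r.coeff 0
    have ha : a ≠ 0 := fun ha => hr0 (by rw [hrC, ha, Polynomial.C_0])
    have hp : p = (Polynomial.X - Polynomial.C w₀) ^ d * Polynomial.C a := by
      have : p = q.comp (Polynomial.X - Polynomial.C w₀) := by
        simp [q, Polynomial.comp_assoc]
      rw [this, hr, hm, hrC, Polynomial.mul_comp, Polynomial.X_pow_comp, Polynomial.C_comp]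
    have hco : ∀ i < d, c i = (-w₀) ^ (d - i) * (d.choose i) * a := by
      intro i hi
      rw [← hpc i hi, hp, Polynomial.coeff_mul_C, sub_eq_add_neg, ← Polynomial.C_neg, Polynomial.coeff_X_add_C_pow]
    have hw : w₀ = 0 := by
      have := hco (d - 1) (by omega)
      rw [hc, show d - (d - 1) = 1 by omega, pow_one] at this
      have h2 : (d.choose (d - 1) : ℝ) ≠ 0 := by
        exact_mod_cast (Nat.choose_pos (Nat.sub_le d 1)).ne'
      simpa [ha, h2] using this.symm
    rcases h with h | ⟨i, hi, hci⟩
    · exact h hw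
    · refine hci ?_
      rw [hco i hi, hw, neg_zero, zero_pow (by omega)]; simp
  · have hfun : (fun w => ∑ i ∈ Finset.range d, c i * (w + w₀) ^ i + (w + w₀) ^ d * u₀)
        = fun w => w ^ m * r.eval w := by
      ext w
      have : q.eval w = w ^ m * r.eval w := by
        conv_lhs => rw [hr]
        simp
      rw [← this]
      simp only [q, p, Polynomial.eval_comp, Polynomial.eval_add, Polynomial.eval_finsetSum,
        Polynomial.eval_mul, Polynomial.eval_C, Polynomial.eval_pow, Polynomial.eval_X]
      rw [mul_comm u₀]
    rw [hfun]
    have hra : AnalyticAt ℝ (fun w => r.eval w) 0 := by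
      have := (analyticAt_id (𝕜 := ℝ) (z := (0 : ℝ))).aeval_polynomial r
      simpa using this
    have hm : AnalyticAt ℝ (fun w => w ^ m * r.eval w) 0 := (analyticAt_id.pow m).mul hra
    rw [hm.analyticOrderAt_eq_natCast]
    exact ⟨_, hra, hre, Eventually.of_forall fun w => by simp⟩

lemma analyticAt_comp_fst {c : (Fin n → ℝ) → ℝ} (h : AnalyticAt ℝ c 0) :
    AnalyticAt ℝ (fun y : (Fin n → ℝ) × ℝ => c y.1) 0 :=
  AnalyticAt.comp (g := c) (f := Prod.fst) h analyticAt_fst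

/-- Monomialization of a weighted polynomial `∑ x ^ ((d - i) γ) c i zⁱ + zᵈ u` with `c (d - 1) = 0`
and some `c i ≠ 0` at the origin. In the vertical chart of the blow-up of `{x j = z = 0}`, the
monomial form is reached at once. In the chart centred at the slope `0`, the sum of the exponents in
`γ` drops, as long as it does not reach zero. In all other cases the order in `z` falls below `d`
by `order_lt_of_coeff`. -/
lemma mz_of_weighted {d : ℕ} (hd : 0 < d) (IH : ∀ d' < d, MonOrder n d') (s : ℕ) :
    ∀ (γ : Fin n → ℕ), ∑ i, γ i = s → γ ≠ 0 → ∀ (b : (Fin n → ℝ) → ℝ), Mon (fun i x => x i) b →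
    ∀ (c : ℕ → (Fin n → ℝ) → ℝ), (∀ i, AnalyticAt ℝ (c i) 0) → c (d - 1) 0 = 0 →
    (∃ i < d, c i 0 ≠ 0) → ∀ (u : (Fin n → ℝ) × ℝ → ℝ), AnalyticAt ℝ u 0 → u 0 ≠ 0 →
    Mz (Mon (pcoord n)) (fun y => b y.1 *
      (∑ i ∈ Finset.range d, mono γ y.1 ^ (d - i) * c i y.1 * y.2 ^ i + y.2 ^ d * u y)) := by
  induction s using Nat.strong_induction_on with
  | _ s ihs =>
  intro γ hs hγ b hb c hc hcd hci u hu hu0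
  obtain ⟨j, hj⟩ := Function.ne_iff.1 hγ
  have hj : 0 < γ j := Nat.pos_of_ne_zero hj
  have hlt := sum_sub_single_lt hj
  set γ' : Fin n → ℕ := γ - Pi.single j 1 with hγ'
  have hm : ∀ x : Fin n → ℝ, mono γ x = x j * mono γ' x := mono_eq_mul_of_pos hj
  have hma : ∀ (δ : Fin n → ℕ) (x : Fin n → ℝ), AnalyticAt ℝ (mono δ) x := fun δ x =>
    analyticAt_mono δ fun i => analyticAt_coord i x
  refine Mz.of_cov (Cov.blowup j) ?_
  rintro _ (rfl | ⟨w₀, rfl⟩)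
  · -- in this chart the term `zᵈ u` divides all the others
    let m : (Fin n → ℝ) × ℝ → ℝ := fun y => y.1 j * mono γ' (chartB j y).1
    have hB : AnalyticAt ℝ (fun y => (chartB j y).1) 0 :=
      AnalyticAt.comp (g := Prod.fst) analyticAt_fst (analyticAt_chartB j 0)
    have hB0 : (chartB j (0 : (Fin n → ℝ) × ℝ)).1 = 0 := by rw [chartB_zero]; rfl
    have hmB : ∀ y, mono γ (chartB j y).1 = y.2 * m y := by
      intro y
      rw [hm]; simp only [m, chartB, Function.update_self]; ring
    have hman : AnalyticAt ℝ m 0 :=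
      (analyticAt_fst_coord j 0).mul (AnalyticAt.comp (g := mono γ') (hma _ _) hB)
    have hm0 : m 0 = 0 := by simp [m]
    have hcB : ∀ i, AnalyticAt ℝ (fun y => c i (chartB j y).1) 0 := fun i =>
      AnalyticAt.comp (g := c i) (by rw [hB0]; exact hc i) hB
    let V : (Fin n → ℝ) × ℝ → ℝ := fun y =>
      ∑ i ∈ Finset.range d, m y ^ (d - i) * c i (chartB j y).1 + u (chartB j y)
    have hV : AnalyticAt ℝ V 0 :=
      (Finset.analyticAt_fun_sum _ fun i _ => (hman.pow _).mul (hcB i)).add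
        (AnalyticAt.comp (g := u) (by rw [chartB_zero]; exact hu) (analyticAt_chartB j 0))
    have hV0 : V 0 ≠ 0 := by
      have : V 0 = u 0 := by
        simp only [V, hm0, chartB_zero]
        rw [Finset.sum_eq_zero, zero_add]
        intro i hi
        rw [zero_pow (Nat.sub_ne_zero_of_lt (Finset.mem_range.1 hi)), zero_mul]
      rwa [this]
    refine Mz.of_self (Mon.congr (F := fun y => b (chartB j y).1 * (y.2 ^ d * V y)) ?_
      (Eventually.of_forall fun y => ?_))
    · refine Mon.mul (hb.comp hB hB0 fun i => ?_) ((Mon.snd.pow d).mul (Mon.unit hV hV0))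
      by_cases h : i = j
      · subst h
        simpa [chartB] using Mon.snd.mul (Mon.fst i)
      · simpa [chartB, h] using Mon.fst i
    · simp only [V, hmB, mul_add, Finset.mul_sum]
      congr 1
      · refine Finset.sum_congr rfl fun i hi => ?_
        have : y.2 ^ d = y.2 ^ (d - i) * y.2 ^ i := by
          rw [← pow_add, Nat.sub_add_cancel (Finset.mem_range.1 hi).le]
        rw [this, mul_pow]; simp only [chartB]; ring
  · let u' : (Fin n → ℝ) × ℝ → ℝ := fun y => u (chartA j w₀ y)
    have hu' : AnalyticAt ℝ u' 0 :=
      AnalyticAt.comp (g := u) (by rw [chartA_zero]; exact hu) (analyticAt_chartA j w₀ 0)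
    have hu'0 : u' 0 ≠ 0 := by simpa only [u', chartA_zero] using hu0
    have hb' : Mon (fun i x => x i) (fun x : Fin n → ℝ => b x * x j ^ d) :=
      hb.mul ((Mon.coord (c := fun i (x : Fin n → ℝ) => x i) j).pow d)
    let G : (Fin n → ℝ) × ℝ → ℝ := fun y =>
      ∑ i ∈ Finset.range d, mono γ' y.1 ^ (d - i) * c i y.1 * (y.2 + w₀) ^ i
        + (y.2 + w₀) ^ d * u' y
    have hFG : (fun y => b (chartA j w₀ y).1 * (∑ i ∈ Finset.range d,
        mono γ (chartA j w₀ y).1 ^ (d - i) * c i (chartA j w₀ y).1 * (chartA j w₀ y).2 ^ i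
        + (chartA j w₀ y).2 ^ d * u (chartA j w₀ y))) = fun y => (b y.1 * y.1 j ^ d) * G y := by
      ext y
      simp only [G, u', mul_add, Finset.mul_sum]
      congr 1
      · refine Finset.sum_congr rfl fun i hi => ?_
        have : y.1 j ^ d = y.1 j ^ (d - i) * y.1 j ^ i := by
          rw [← pow_add, Nat.sub_add_cancel (Finset.mem_range.1 hi).le]
        rw [this]
        simp only [chartA, hm, mul_pow]; ring
      · simp only [chartA, mul_pow]; ring
    rw [hFG]
    by_cases hcase : w₀ = 0 ∧ γ' ≠ 0
    · obtain ⟨rfl, hγ0⟩ := hcase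
      have := ihs _ (hs ▸ hlt) γ' rfl hγ0 _ hb' c hc hcd hci u' hu' hu'0
      simpa only [G, add_zero] using this
    · obtain ⟨d', hd', hord⟩ := order_lt_of_coeff hd (fun i => mono γ' 0 ^ (d - i) * c i 0)
        (w₀ := w₀) hu'0 (by simp [hcd]) (by
          by_cases hw : w₀ = 0
          · right
            have h0 : γ' = 0 := by by_contra h; exact hcase ⟨hw, h⟩
            simpa [h0, mono_zero] using hci
          · exact Or.inl hw)
      refine IH d' hd' _ G hb'.analyticAt hb'.not_zero ?_ ?_
      · have hz : AnalyticAt ℝ (fun y : (Fin n → ℝ) × ℝ => y.2 + w₀) 0 :=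
          analyticAt_snd.add analyticAt_const
        exact (Finset.analyticAt_fun_sum _ fun i _ =>
          ((((analyticAt_comp_fst (hma γ' 0)).pow _).mul (analyticAt_comp_fst (hc i))).mul
            (hz.pow i))).add ((hz.pow d).mul hu')
      · rw [← hord]
        have hu'c : ∀ w : ℝ, u' ((0 : Fin n → ℝ), w) = u' 0 := fun w => by
          simp [u', chartA]
        simp only [G, hu'c]

end Gamma

/-! ### Comparing monomials -/

section Compare
variable {n : ℕ}

/-- If some exponent of `a` exceeds the corresponding exponent of `b`, then `x ^ a` is smaller than
`x ^ b`, up to units, somewhere in the positive orthant and arbitrarily close to `0`. -/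
lemma exists_pos_lt {a b : Fin n → ℕ} {i : Fin n} (hab : b i < a i) {U V : (Fin n → ℝ) → ℝ}
    (hU : ContinuousAt U 0) (hV : ContinuousAt V 0) (hV0 : 0 < V 0) {S : Set (Fin n → ℝ)}
    (hS : S ∈ 𝓝 0) : ∃ x ∈ S, (∀ k, 0 < x k) ∧ mono a x * U x < mono b x * V x := by
  -- along this curve the exponent of `x i` dominates
  let N := ∑ k, b k + 1
  let w : Fin n → ℕ := fun k => 1 + if k = i then N else 0
  let γ : ℝ → Fin n → ℝ := fun s k => s ^ w k
  have hw : ∀ k, w k ≠ 0 := fun k => by simp [w]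
  have hγc : Continuous γ := continuous_pi fun k => continuous_pow _
  have hγ : Tendsto γ (𝓝 0) (𝓝 0) := by
    have h0 : γ 0 = 0 := by ext k; simp [γ, hw]
    simpa only [h0] using hγc.tendsto 0
  have hmono : ∀ (α : Fin n → ℕ) s, mono α (γ s) = s ^ (∑ k, α k + N * α i) := by
    intro α s
    simp only [mono, γ, ← pow_mul]
    rw [Finset.prod_pow_eq_pow_sum]
    congr 1
    simp [w, add_mul, Finset.sum_add_distrib]
  have hlt : ∑ k, b k + N * b i < ∑ k, a k + N * a i := by
    have h1 : N * (b i + 1) ≤ N * a i := Nat.mul_le_mul_left _ hab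
    have h2 : N * (b i + 1) = N * b i + (∑ k, b k + 1) := by simp [N, mul_add]
    omega
  obtain ⟨e, he⟩ := Nat.exists_eq_add_of_lt hlt
  have ht : Tendsto (fun s => V (γ s) - s ^ (e + 1) * U (γ s)) (𝓝 0) (𝓝 (V 0)) := by
    have h1 : Tendsto (fun s : ℝ => s ^ (e + 1)) (𝓝 0) (𝓝 0) := by
      simpa using (continuous_pow (e + 1)).tendsto (0 : ℝ)
    simpa using (hV.tendsto.comp hγ).sub (h1.mul (hU.tendsto.comp hγ))
  have hev := ((ht.eventually (lt_mem_nhds hV0)).and (hγ hS)).filter_mono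
    (nhdsWithin_le_nhds (s := Set.Ioi 0))
  obtain ⟨s, ⟨hs, hsS⟩, hs0⟩ := (hev.and self_mem_nhdsWithin).exists
  have hs0 : 0 < s := hs0
  refine ⟨γ s, hsS, fun k => pow_pos hs0 _, ?_⟩
  rw [hmono, hmono, he, add_assoc, pow_add, mul_assoc]
  exact mul_lt_mul_of_pos_left (sub_pos.1 hs) (pow_pos hs0 _)

/-- Two monomials (times positive units) whose difference is again monomial are comparable. -/
lemma comparable_of_sub {a b : Fin n → ℕ} {U V : (Fin n → ℝ) → ℝ} (hU : AnalyticAt ℝ U 0)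
    (hV : AnalyticAt ℝ V 0) (hU0 : 0 < U 0) (hV0 : 0 < V 0) {f : (Fin n → ℝ) → ℝ}
    (hf : ∀ᶠ x in 𝓝 0, f x = mono a x * U x - mono b x * V x)
    (h : (∀ᶠ x in 𝓝 0, f x = 0) ∨ Mon (fun i x => x i) f) : a ≤ b ∨ b ≤ a := by
  by_contra hcon
  rw [not_or, Pi.le_def, Pi.le_def, not_forall, not_forall] at hcon
  obtain ⟨⟨i, hi⟩, ⟨j, hj⟩⟩ := hcon
  rw [not_le] at hi hj
  rcases h with h | ⟨c, W, hW, hW0, hfW⟩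
  · obtain ⟨x, ⟨hx1, hx2⟩, -, hlt⟩ := exists_pos_lt hi hU.continuousAt hV.continuousAt hV0
      (inter_mem hf h)
    simp only [Set.mem_ofPred_eq] at hx1 hx2
    linarith
  · obtain ⟨r, hr, hball⟩ := Metric.eventually_nhds_iff_ball.1
      ((hf.and hfW).and ((hW.continuousAt.eventually_ne hW0).and
        (hU.eventually_analyticAt.and hV.eventually_analyticAt)))
    obtain ⟨x, hx, hxp, hxlt⟩ := exists_pos_lt hi hU.continuousAt hV.continuousAt hV0
      (Metric.ball_mem_nhds _ hr)
    obtain ⟨y, hy, hyp, hylt⟩ := exists_pos_lt hj hV.continuousAt hU.continuousAt hU0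
      (Metric.ball_mem_nhds _ hr)
    let P : Set (Fin n → ℝ) := Metric.ball 0 r ∩ {x | ∀ k, 0 < x k}
    have hP : Convex ℝ P := by
      refine (convex_ball _ _).inter ?_
      rw [show {x : Fin n → ℝ | ∀ k, 0 < x k} = ⋂ k, {x | 0 < x k} by ext; simp]
      exact convex_iInter fun k =>
        convex_halfSpace_gt (LinearMap.proj (R := ℝ) (φ := fun _ : Fin n => ℝ) k).isLinear 0
    have hcont : ContinuousOn (fun x => mono a x * U x - mono b x * V x) P := by
      intro z hz
      have hz' := (hball z hz.1).2.2
      have hm : ∀ α : Fin n → ℕ, ContinuousAt (mono α) z := fun α =>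
        (analyticAt_mono α fun i => analyticAt_coord i z).continuousAt
      exact (((hm a).mul hz'.1.continuousAt).sub
        ((hm b).mul hz'.2.continuousAt)).continuousWithinAt
    obtain ⟨z, hz, hz0⟩ := hP.isPreconnected.intermediate_value (a := x) (b := y) ⟨hx, hxp⟩
      ⟨hy, hyp⟩ hcont (show (0 : ℝ) ∈ Set.Icc _ _ from ⟨by linarith, by linarith⟩)
    have hz1 := hball z hz.1
    have : mono c z * W z = 0 := by
      have hz0 : mono a z * U z - mono b z * V z = 0 := hz0
      rw [← hz1.1.2, hz1.1.1, hz0]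
    rcases mul_eq_zero.1 this with h | h
    · exact (Finset.prod_pos fun k _ => pow_pos (hz.2 k) _).ne' h
    · exact hz1.2.1 h

end Compare

/-! ### Expansion in the last variable and Tschirnhaus translation -/

section Expand
variable {E : Type*} [NormedAddCommGroup E] [NormedSpace ℝ E]

/-- Taylor expansion with respect to the last variable. -/
lemma exists_expansion {G : E × ℝ → ℝ} (hG : AnalyticAt ℝ G 0) (d : ℕ) :
    ∃ (C : ℕ → E → ℝ) (u : E × ℝ → ℝ), (∀ i, AnalyticAt ℝ (C i) 0) ∧ AnalyticAt ℝ u 0 ∧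
      ∀ᶠ y in 𝓝 (0 : E × ℝ), G y = ∑ i ∈ Finset.range d, C i y.1 * y.2 ^ i + y.2 ^ d * u y := by
  induction d with
  | zero => exact ⟨fun _ _ => 0, G, fun _ => analyticAt_const, hG, by simp⟩
  | succ d ih =>
    obtain ⟨C, u, hC, hu, h⟩ := ih
    obtain ⟨q, hq, hq'⟩ := hadamard (ℓ := ContinuousLinearMap.snd ℝ E ℝ) (e := (0, 1)) hu
    have hinl : AnalyticAt ℝ (fun x : E => (x, (0 : ℝ))) 0 :=
      analyticAt_id.prod analyticAt_const
    refine ⟨fun i => if i = d then fun x => u (x, 0) else C i, q, fun i => ?_, hq, ?_⟩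
    · by_cases hi : i = d
      · simp only [hi, if_true]
        exact AnalyticAt.comp (g := u) hu hinl
      · simpa only [hi, if_false] using hC i
    · filter_upwards [h, hq'] with y hy hy'
      rw [hy, Finset.sum_range_succ]
      have h1 : u y = u (y.1, 0) + y.2 * q y := by
        rw [hy']
        congr 2
        ext <;> simp
      rw [h1, if_pos rfl]
      have : ∑ i ∈ Finset.range d, (if i = d then fun x => u (x, 0) else C i) y.1 * y.2 ^ i
          = ∑ i ∈ Finset.range d, C i y.1 * y.2 ^ i :=
        Finset.sum_congr rfl fun i hi => by rw [if_neg (Finset.mem_range.1 hi).ne]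
      rw [this]; ring

lemma iteratedDeriv_expansion {d : ℕ} (a : ℕ → ℝ) {w k : ℝ → ℝ} (hw : AnalyticAt ℝ w 0)
    (hk : ∀ᶠ z in 𝓝 (0 : ℝ), k z = ∑ i ∈ Finset.range d, a i * z ^ i + z ^ d * w z) {j : ℕ}
    (hj : j < d) : iteratedDeriv j k 0 = j.factorial * a j := by
  have hwa : AnalyticAt ℝ (fun z => z ^ d * w z) 0 := (analyticAt_id.pow d).mul hw
  have h1 : iteratedDeriv j (fun z => z ^ d * w z) 0 = 0 := by
    refine (natCast_le_analyticOrderAt_iff_iteratedDeriv_eq_zero hwa).1 ?_ j hj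
    rw [natCast_le_analyticOrderAt hwa]
    exact ⟨w, hw, by simp⟩
  have hp : ∀ i, ContDiffAt ℝ j (fun z : ℝ => a i * z ^ i) 0 := fun i => by fun_prop
  rw [Filter.EventuallyEq.iteratedDeriv_eq (g := fun z => ∑ i ∈ Finset.range d, a i * z ^ i
    + z ^ d * w z) j hk, iteratedDeriv_fun_add (ContDiffAt.sum fun i _ => hp i) hwa.contDiffAt, h1,
    iteratedDeriv_fun_sum fun i _ => hp i, add_zero, Finset.sum_eq_single j]
  · rw [iteratedDeriv_const_mul_field, iteratedDeriv_fun_pow_zero, if_pos rfl, mul_comm]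
  · intro i _ hij
    rw [iteratedDeriv_const_mul_field, iteratedDeriv_fun_pow_zero, if_neg hij.symm]
    simp
  · intro h; exact absurd (Finset.mem_range.2 hj) h

/-- The implicit function theorem in the analytic category, for one scalar equation. -/
lemma exists_implicit [CompleteSpace E] {f : E × ℝ → ℝ} (hf : AnalyticAt ℝ f 0) (h0 : f 0 = 0)
    (hd : deriv (fun s : ℝ => f (0, s)) 0 ≠ 0) :
    ∃ g : E → ℝ, AnalyticAt ℝ g 0 ∧ g 0 = 0 ∧ ∀ᶠ x in 𝓝 0, f (x, g x) = 0 := by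
  have hc : ContDiffAt ℝ ⊤ f (0 : E × ℝ) := hf.contDiffAt
  have hder : deriv (fun s : ℝ => f (0, s)) 0 = fderiv ℝ f 0 (0, 1) := by
    have h1 : HasDerivAt (fun s : ℝ => ((0 : E), s)) (0, 1) 0 :=
      (hasDerivAt_const _ _).prodMk (hasDerivAt_id _)
    exact (hf.differentiableAt.hasFDerivAt.comp_hasDerivAt (0 : ℝ) h1).deriv
  rw [hder] at hd
  have hinv : (fderiv ℝ f 0 ∘L .inr ℝ E ℝ).IsInvertible := by
    refine ⟨ContinuousLinearEquiv.unitsEquivAut ℝ (Units.mk0 _ hd), ?_⟩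
    ext; simp
  refine ⟨hc.implicitFunction (by simp) hinv, ?_, ?_, ?_⟩
  · exact (hc.contDiffAt_implicitFunction (by simp) hinv).analyticAt
  · exact hc.implicitFunction_apply_self (by simp) hinv
  · have := hc.eventually_apply_implicitFunction (by simp) hinv
    rwa [h0] at this

/-- After an analytic translation of the last variable, the Taylor expansion of order `d` has no
term of degree `d - 1`. -/
lemma exists_tschirnhaus [CompleteSpace E] {f : E × ℝ → ℝ} (hf : AnalyticAt ℝ f 0) {d : ℕ}
    (hd : 0 < d) (hord : analyticOrderAt (fun z : ℝ => f (0, z)) 0 = d) :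
    ∃ (g : E → ℝ) (c : ℕ → E → ℝ) (u : E × ℝ → ℝ), AnalyticAt ℝ g 0 ∧ g 0 = 0 ∧
      (∀ i, AnalyticAt ℝ (c i) 0) ∧ (∀ i < d, c i 0 = 0) ∧ (∀ᶠ x in 𝓝 0, c (d - 1) x = 0) ∧
      AnalyticAt ℝ u 0 ∧ u 0 ≠ 0 ∧ ∀ᶠ y in 𝓝 (0 : E × ℝ),
        f (y.1, y.2 + g y.1) = ∑ i ∈ Finset.range d, c i y.1 * y.2 ^ i + y.2 ^ d * u y := by
  have hadd : AnalyticAt ℝ (fun y : (E × ℝ) × ℝ => (y.1.1, y.2 + y.1.2)) 0 :=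
    (analyticAt_fst.comp analyticAt_fst).prod
      (analyticAt_snd.add (analyticAt_snd.comp analyticAt_fst))
  obtain ⟨C, u, hC, hu, h⟩ := exists_expansion
    (G := fun y : (E × ℝ) × ℝ => f (y.1.1, y.2 + y.1.2))
    (AnalyticAt.comp (g := f) (by
      rw [show ((0 : (E × ℝ) × ℝ).1.1, (0 : (E × ℝ) × ℝ).2 + (0 : (E × ℝ) × ℝ).1.2) = (0 : E × ℝ) by
        ext <;> simp]
      exact hf) hadd) d
  have hinr : ∀ s : ℝ, AnalyticAt ℝ (fun s : ℝ => ((0 : E), s)) s := fun s =>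
    analyticAt_const.prod analyticAt_id
  set F : ℝ → ℝ := fun z => f (0, z) with hF
  have hFa : AnalyticAt ℝ F 0 := AnalyticAt.comp (g := f) hf (hinr 0)
  have hF1 := (analyticOrderAt_eq_nat_iff_iteratedDeriv_eq_zero hFa).1 hord
  -- the coefficients along `x = 0` are the Taylor coefficients of `F`
  have hCF : ∀ᶠ s in 𝓝 (0 : ℝ), ∀ i < d,
      iteratedDeriv i F s = i.factorial * C i ((0 : E), s) := by
    have hu' := hu.eventually_analyticAt
    have ht : Tendsto (fun s : ℝ => (((0 : E), s), (0 : ℝ))) (𝓝 0) (𝓝 0) := by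
      exact Continuous.tendsto' (by fun_prop) _ _ rfl
    filter_upwards [ht.eventually hu', ht.eventually h.eventually_nhds] with s hs1 hs2 i hi
    have ht2 : Tendsto (fun z : ℝ => (((0 : E), s), z)) (𝓝 0) (𝓝 (((0 : E), s), (0 : ℝ))) :=
      Continuous.tendsto (by fun_prop) 0
    have := iteratedDeriv_expansion (fun i => C i (0, s)) (w := fun z => u ((0, s), z))
      (k := fun z => F (z + s))
      (AnalyticAt.comp (g := u) hs1 (analyticAt_const.prod analyticAt_id)) (ht2.eventually hs2) hi
    rw [iteratedDeriv_comp_add_const] at this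
    simp only [zero_add] at this
    exact this
  have hC0 : ∀ i < d, C i 0 = 0 := by
    intro i hi
    have h1 : iteratedDeriv i F 0 = i.factorial * C i 0 := hCF.self_of_nhds i hi
    rw [hF1.1 i hi] at h1
    exact (mul_eq_zero.1 h1.symm).resolve_left (by exact_mod_cast i.factorial_ne_zero)
  have hfac : ((d - 1).factorial : ℝ) ≠ 0 := by exact_mod_cast (d - 1).factorial_ne_zero
  have hCd : deriv (fun s : ℝ => C (d - 1) (0, s)) 0 ≠ 0 := by
    have h1 : (fun s : ℝ => C (d - 1) (0, s)) =ᶠ[𝓝 0]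
        fun s => ((d - 1).factorial : ℝ)⁻¹ * iteratedDeriv (d - 1) F s := by
      filter_upwards [hCF] with s hs
      rw [hs (d - 1) (by omega), inv_mul_cancel_left₀ hfac]
    rw [h1.deriv_eq, deriv_const_mul_field, ← iteratedDeriv_succ, Nat.sub_add_cancel hd]
    exact mul_ne_zero (inv_ne_zero hfac) hF1.2
  obtain ⟨g, hg, hg0, hgC⟩ := exists_implicit (hC (d - 1)) (hC0 _ (by omega)) hCd
  have hgr : AnalyticAt ℝ (fun x => (x, g x)) 0 := analyticAt_id.prod hg
  have hgu : AnalyticAt ℝ (fun y : E × ℝ => ((y.1, g y.1), y.2)) 0 :=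
    (analyticAt_fst.prod (AnalyticAt.comp (g := g) (f := Prod.fst) hg analyticAt_fst)).prod
      analyticAt_snd
  have hgu0 : (((0 : E × ℝ).1, g (0 : E × ℝ).1), (0 : E × ℝ).2) = 0 := by simp [hg0]
  refine ⟨g, fun i x => C i (x, g x), fun y => u ((y.1, g y.1), y.2), hg, hg0, fun i => ?_,
    fun i hi => ?_, hgC, ?_, ?_, ?_⟩
  · refine AnalyticAt.comp (g := C i) ?_ hgr
    rw [hg0]; exact hC i
  · simp only [hg0]; exact hC0 i hi
  · refine AnalyticAt.comp (g := u) ?_ hgu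
    rw [hgu0]; exact hu
  · change u (((0 : E × ℝ).1, g (0 : E × ℝ).1), (0 : E × ℝ).2) ≠ 0
    rw [hgu0]
    intro hu0
    -- otherwise `F` would vanish to order greater than `d`
    have ht : Tendsto (fun z : ℝ => (((0 : E), (0 : ℝ)), z)) (𝓝 0) (𝓝 0) :=
      Continuous.tendsto' (by fun_prop) _ _ rfl
    have huz : AnalyticAt ℝ (fun z : ℝ => u ((0, 0), z)) 0 :=
      AnalyticAt.comp (g := u) hu (analyticAt_const.prod analyticAt_id)
    have hFu : F =ᶠ[𝓝 0] (fun z => z) ^ d * fun z => u ((0, 0), z) := by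
      filter_upwards [ht.eventually h] with z hz
      simp only [add_zero] at hz
      simp only [hF, Pi.mul_apply, Pi.pow_apply]
      rw [hz, Finset.sum_eq_zero, zero_add]
      intro i hi
      have := hC0 i (Finset.mem_range.1 hi)
      rw [Prod.zero_eq_mk] at this
      rw [this, zero_mul]
    have hid : AnalyticAt ℝ (fun z : ℝ => z) 0 := analyticAt_id
    rw [analyticOrderAt_congr hFu, analyticOrderAt_mul (hid.pow d) huz,
      analyticOrderAt_pow hid, show analyticOrderAt (fun z : ℝ => z) 0 = 1 from
        analyticOrderAt_id] at hord
    have h1 : analyticOrderAt (fun z : ℝ => u ((0, 0), z)) 0 = 0 := by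
      have : (d : ℕ∞) + analyticOrderAt (fun z : ℝ => u ((0, 0), z)) 0 = (d : ℕ∞) + 0 := by
        simpa using hord
      exact ENat.add_right_injective_of_ne_top (ENat.natCast_ne_top d) this
    exact huz.analyticOrderAt_eq_zero.1 h1 hu0
  · have ht : Tendsto (fun y : E × ℝ => ((y.1, g y.1), y.2)) (𝓝 0) (𝓝 0) := by
      have := hgu.continuousAt.tendsto
      rwa [hgu0] at this
    exact ht.eventually h

end Expand

/-! ### Aligning the coefficients by a power substitution -/

section Align
variable {n : ℕ}

lemma mono_powers (α : Fin n → ℕ) (ε u : Fin n → ℝ) (D : ℕ) :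
    mono α (fun i => ε i * u i ^ D) = mono α ε * mono (D • α) u := by
  simp only [mono, mul_pow, Finset.prod_mul_distrib, ← pow_mul, Pi.smul_apply, smul_eq_mul]

/-- The power substitution of exponent `d!` makes the coefficients `c i` divisible by
`x ^ ((d - i) γ)`, with a unit as quotient for at least one `i`. The relevant quantities are the
roots `c i ^ (1 / (d - i))`, compared through `c i ^ (2 d! / (d - i))`: the differences of these
powers are monomial or zero, so that `comparable_of_sub` applies; the even exponent makes the units
positive. The index chosen minimizes the exponent. -/
lemma align {d : ℕ} {Z : Finset ℕ} (hZd : ∀ i ∈ Z, i < d) (hZ : Z.Nonempty)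
    {c : ℕ → (Fin n → ℝ) → ℝ} (hc : ∀ i ∈ Z, Mon (fun i x => x i) (c i))
    (hc0 : ∀ i ∈ Z, c i 0 = 0)
    (hcmp : ∀ i ∈ Z, ∀ j ∈ Z,
      (∀ᶠ x in 𝓝 0, c i x ^ (2 * (d.factorial / (d - i))) -
        c j x ^ (2 * (d.factorial / (d - j))) = 0) ∨
      Mon (fun i x => x i) fun x => c i x ^ (2 * (d.factorial / (d - i))) -
        c j x ^ (2 * (d.factorial / (d - j)))) :
    ∃ γ : Fin n → ℕ, γ ≠ 0 ∧ ∀ ε : Fin n → ℝ, (∀ i, ε i ∈ ({1, -1} : Set ℝ)) →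
      ∃ c' : ℕ → (Fin n → ℝ) → ℝ, (∀ i, AnalyticAt ℝ (c' i) 0) ∧ (∀ i ∉ Z, c' i = 0) ∧
        (∀ i ∈ Z, ∀ᶠ u : Fin n → ℝ in 𝓝 0, c i (fun k => ε k * u k ^ d.factorial) =
          mono γ u ^ (d - i) * c' i u) ∧ ∃ i ∈ Z, c' i 0 ≠ 0 := by
  classical
  choose! α U hUa hU0 hU using hc
  set k : ℕ → ℕ := fun i => d.factorial / (d - i) with hk
  have hkd : ∀ i ∈ Z, (d - i) * k i = d.factorial := fun i hi =>
    Nat.mul_div_cancel' (Nat.dvd_factorial (by have := hZd i hi; omega) (Nat.sub_le _ _))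
  have hcomp : ∀ i ∈ Z, ∀ j ∈ Z, (2 * k i) • α i ≤ (2 * k j) • α j ∨
      (2 * k j) • α j ≤ (2 * k i) • α i := by
    intro i hi j hj
    have hpos : ∀ l ∈ Z, 0 < U l 0 ^ (2 * k l) := fun l hl => by
      rw [pow_mul]; exact pow_pos (by have := hU0 l hl; positivity) _
    refine comparable_of_sub ((hUa i hi).pow (2 * k i)) ((hUa j hj).pow (2 * k j)) (hpos i hi)
      (hpos j hj) ?_ (hcmp i hi j hj)
    filter_upwards [hU i hi, hU j hj] with x h1 h2
    rw [h1, h2, mul_pow, mul_pow, mono_nsmul, mono_nsmul]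
    rfl
  obtain ⟨i₀, hi₀, hmin⟩ := Z.exists_min_image (fun i => ∑ j, k i * α i j) hZ
  have hle : ∀ i ∈ Z, ∀ j, k i₀ * α i₀ j ≤ k i * α i j := by
    intro i hi
    rcases hcomp i₀ hi₀ i hi with h | h
    · intro j
      have := h j
      simp only [Pi.smul_apply, smul_eq_mul, mul_assoc] at this
      omega
    · have h' : ∀ j ∈ Finset.univ, k i * α i j ≤ k i₀ * α i₀ j := by
        intro j _
        have := h j
        simp only [Pi.smul_apply, smul_eq_mul, mul_assoc] at this
        omega
      have := (Finset.sum_eq_sum_iff_of_le h').1 (le_antisymm (Finset.sum_le_sum h') (hmin i hi))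
      exact fun j => (this j (Finset.mem_univ j)).ge
  have hα0 : α i₀ ≠ 0 := by
    intro h
    have h1 := (hU i₀ hi₀).self_of_nhds
    rw [hc0 i₀ hi₀, h, mono_zero, one_mul] at h1
    exact hU0 i₀ hi₀ h1.symm
  have hkpos : 0 < k i₀ := Nat.pos_of_mul_pos_left (a := d - i₀) (by rw [hkd i₀ hi₀]; exact d.factorial_pos)
  refine ⟨k i₀ • α i₀, ?_, fun ε hε => ?_⟩
  · intro h
    refine hα0 (funext fun j => ?_)
    have := congrFun h j
    simp only [Pi.smul_apply, smul_eq_mul, Pi.zero_apply, mul_eq_zero] at this ⊢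
    omega
  have hdf : d.factorial ≠ 0 := d.factorial_ne_zero
  let φ : (Fin n → ℝ) → Fin n → ℝ := fun u i => ε i * u i ^ d.factorial
  have hφa : AnalyticAt ℝ φ 0 :=
    AnalyticAt.pi fun i => analyticAt_const.mul ((analyticAt_coord i 0).pow _)
  have hφ0 : φ 0 = 0 := by ext i; simp [φ, hdf]
  have hφt : Tendsto φ (𝓝 0) (𝓝 0) := by simpa only [hφ0] using hφa.continuousAt.tendsto
  have hε0 : ∀ a : Fin n → ℕ, mono a ε ≠ 0 := fun a =>
    Finset.prod_ne_zero_iff.2 fun i _ => pow_ne_zero _ (by rcases hε i with h | h <;> rw [h] <;> norm_num)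
  let δ : ℕ → Fin n → ℕ := fun i => (d - i) • (k i • α i - k i₀ • α i₀)
  have hδ : ∀ i ∈ Z, d.factorial • α i = (d - i) • (k i₀ • α i₀) + δ i := by
    intro i hi
    ext j
    have h1 := hle i hi j
    simp only [δ, Pi.smul_apply, Pi.add_apply, Pi.sub_apply, smul_eq_mul, ← mul_add]
    rw [← hkd i hi, mul_assoc, Nat.add_sub_cancel' h1]
  refine ⟨fun i => if i ∈ Z then fun u => mono (α i) ε * mono (δ i) u * U i (φ u) else 0,
    fun i => ?_, fun i hi => if_neg hi, fun i hi => ?_, i₀, hi₀, ?_⟩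
  · by_cases hi : i ∈ Z
    · simp only [hi, if_true]
      exact (analyticAt_const.mul (analyticAt_mono _ fun i => analyticAt_coord i 0)).mul
        (AnalyticAt.comp (by rw [hφ0]; exact hUa i hi) hφa)
    · simp only [hi, if_false]
      exact analyticAt_const
  · filter_upwards [hφt.eventually (hU i hi)] with u hu
    simp only [hi, if_true]
    refine hu.trans ?_
    have h1 : mono (α i) (φ u) = mono (α i) ε * mono (d.factorial • α i) u := mono_powers ..
    have h2 : mono (k i₀ • α i₀) u ^ (d - i) = mono ((d - i) • (k i₀ • α i₀)) u := by
      rw [mono_nsmul (d - i)]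
    change mono (α i) (φ u) * U i (φ u) = _
    rw [h1, hδ i hi, mono_add, h2]; ring
  · simp only [hi₀, if_true]
    have : δ i₀ = 0 := by simp [δ]
    rw [this, mono_zero, hφ0, mul_one]
    exact mul_ne_zero (hε0 _) (hU0 i₀ hi₀)

end Align

/-! ### Induction on the order in the last variable -/

section Order
variable {n : ℕ}

/-- Monomialization in `n` variables implies monomialization in `n + 1` variables for functions of
finite order in the last one. A Tschirnhaus translation removes the term of degree `d - 1`; the
hypothesis `hM` is applied to the product of `b`, the nonzero coefficients and the nonzero
differences occurring in `align`; after `align`, `mz_of_weighted` lowers the order. -/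
theorem monOrder (hM : ∀ f : (Fin n → ℝ) → ℝ, AnalyticAt ℝ f 0 → (¬ ∀ᶠ x in 𝓝 0, f x = 0) →
    Mz (Mon fun i x => x i) f) (d : ℕ) : MonOrder n d := by
  classical
  induction d using Nat.strong_induction_on with
  | _ d IH =>
  intro b f hb hb0 hf hord
  have hcongr : ∀ F G : (Fin n → ℝ) × ℝ → ℝ, Mon (pcoord n) F →
      (∀ᶠ y in 𝓝 0, G y = F y) → Mon (pcoord n) G := fun F G => Mon.congr
  rcases Nat.eq_zero_or_pos d with rfl | hd
  · have hfz : AnalyticAt ℝ (fun z : ℝ => f (0, z)) 0 :=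
      AnalyticAt.comp (g := f) hf (analyticAt_const.prod analyticAt_id)
    have hf0 : f 0 ≠ 0 := hfz.analyticOrderAt_eq_zero.1 hord
    exact (monOrder_base hM hb hb0 hf hf0 0).congr hcongr
      (Eventually.of_forall fun y => by rw [pow_zero, one_mul])
  obtain ⟨g, c, u, hg, hg0, hc, hc0, hcd, hu, hu0, hfe⟩ := exists_tschirnhaus hf hd hord
  have hga : AnalyticAt ℝ (fun y : (Fin n → ℝ) × ℝ => g y.1) 0 :=
    AnalyticAt.comp (g := g) (f := Prod.fst) hg analyticAt_fst
  have hτ : Cov {fun y : (Fin n → ℝ) × ℝ => (y.1, y.2 + g y.1)} := by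
    refine Cov.singleton (ψ := fun y => (y.1, y.2 - g y.1))
      (analyticAt_fst.prod (analyticAt_snd.add hga)) (by simp [hg0]) ?_ (by simp)
    have := (analyticAt_fst.prod (analyticAt_snd.sub hga)).continuousAt.tendsto
    simpa [hg0, ← Prod.zero_eq_mk] using this
  refine Mz.of_cov hτ ?_
  rintro _ rfl
  refine Mz.congr hcongr (F := fun y => b y.1 *
    (∑ i ∈ Finset.range d, c i y.1 * y.2 ^ i + y.2 ^ d * u y)) ?_
    (hfe.mono fun y hy => by rw [hy])
  let Z := (Finset.range d).filter fun i => ¬ ∀ᶠ x in 𝓝 0, c i x = 0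
  have hZd : ∀ i ∈ Z, i < d := fun i hi => Finset.mem_range.1 (Finset.mem_filter.1 hi).1
  have hZ0 : ∀ i ∈ Z, ¬ ∀ᶠ x in 𝓝 0, c i x = 0 := fun i hi => (Finset.mem_filter.1 hi).2
  have hZn : ∀ᶠ x in 𝓝 0, ∀ i ∈ (Finset.range d).filter (· ∉ Z), c i x = 0 := by
    rw [Filter.eventually_all_finset]
    intro i hi
    by_contra hcon
    rw [Finset.mem_filter] at hi
    exact hi.2 (Finset.mem_filter.2 ⟨hi.1, hcon⟩)
  have hfst : Tendsto (Prod.fst : (Fin n → ℝ) × ℝ → _) (𝓝 0) (𝓝 0) :=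
    Continuous.tendsto' continuous_fst _ _ rfl
  rcases Z.eq_empty_or_nonempty with hZ | hZ
  · refine (monOrder_base hM hb hb0 hu hu0 d).congr hcongr ?_
    filter_upwards [hfst.eventually hZn] with y hy
    rw [Finset.sum_eq_zero, zero_add]
    intro i hi
    rw [hy i (Finset.mem_filter.2 ⟨hi, by simp [hZ]⟩), zero_mul]
  let e : ℕ → (Fin n → ℝ) → ℝ := fun i x => c i x ^ (2 * (d.factorial / (d - i)))
  have hea : ∀ p : ℕ × ℕ, AnalyticAt ℝ (fun x => e p.1 x - e p.2 x) 0 := fun p =>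
    ((hc p.1).pow _).sub ((hc p.2).pow _)
  let Q := (Z ×ˢ Z).filter fun p => ¬ ∀ᶠ x in 𝓝 0, e p.1 x - e p.2 x = 0
  have hPc : AnalyticAt ℝ (fun x => ∏ i ∈ Z, c i x) 0 :=
    Finset.analyticAt_fun_prod _ fun i _ => hc i
  have hPe : AnalyticAt ℝ (fun x => ∏ p ∈ Q, (e p.1 x - e p.2 x)) 0 :=
    Finset.analyticAt_fun_prod _ fun p _ => hea p
  obtain ⟨Φ, hΦ, h⟩ := hM
    (fun x => b x * ((∏ i ∈ Z, c i x) * ∏ p ∈ Q, (e p.1 x - e p.2 x)))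
    (hb.mul (hPc.mul hPe)) (by
      intro h0
      rcases germ_mul_eq_zero hb (hPc.mul hPe) h0 with h0 | h0
      · exact hb0 h0
      rcases germ_mul_eq_zero hPc hPe h0 with h0 | h0
      · exact germ_prod_ne_zero Z (fun i _ => hc i) hZ0 h0
      · exact germ_prod_ne_zero Q (fun p _ => hea p) (fun p hp => (Finset.mem_filter.1 hp).2) h0)
  refine Mz.of_cov hΦ.prod ?_
  rintro _ ⟨φ, hφ, rfl⟩
  have hφa := (hΦ.1 φ hφ).1
  have hφ0 := (hΦ.1 φ hφ).2
  have hφt := hΦ.tendsto hφ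
  have hcomp : ∀ {k : (Fin n → ℝ) → ℝ}, AnalyticAt ℝ k 0 → AnalyticAt ℝ (fun x => k (φ x)) 0 :=
    fun hk => AnalyticAt.comp (by rwa [hφ0]) hφa
  have hMb : Mon (fun i x => x i) fun x => b (φ x) :=
    Mon.of_mul_left (hcomp hb) (hcomp (hPc.mul hPe)) (h φ hφ)
  have hMce : Mon (fun i x => x i) fun x =>
      (∏ i ∈ Z, c i (φ x)) * ∏ p ∈ Q, (e p.1 (φ x) - e p.2 (φ x)) :=
    Mon.of_mul_left (hcomp (hPc.mul hPe)) (hcomp hb)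
      ((h φ hφ).congr (Eventually.of_forall fun x => mul_comm _ _))
  have hMc : ∀ i ∈ Z, Mon (fun i x => x i) fun x => c i (φ x) := fun i hi =>
    Mon.of_prod Z (f := fun i x => c i (φ x)) (fun i => hcomp (hc i))
      (Mon.of_mul_left (hcomp hPc) (hcomp hPe) hMce) hi
  have hMe : ∀ p ∈ Q, Mon (fun i x => x i) fun x => e p.1 (φ x) - e p.2 (φ x) := fun p hp =>
    Mon.of_prod Q (f := fun p x => e p.1 (φ x) - e p.2 (φ x)) (fun p => hcomp (hea p))
      (Mon.of_mul_left (hcomp hPe) (hcomp hPc)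
        (hMce.congr (Eventually.of_forall fun x => mul_comm _ _))) hp
  obtain ⟨γ, hγ, hal⟩ := align hZd hZ (c := fun i x => c i (φ x)) hMc
    (fun i hi => by simp only [hφ0]; exact hc0 i (hZd i hi)) (by
      intro i hi j hj
      by_cases hij : (i, j) ∈ Q
      · exact Or.inr (hMe _ hij)
      · left
        by_contra hcon
        exact hij (Finset.mem_filter.2 ⟨Finset.mem_product.2 ⟨hi, hj⟩,
          fun h0 => hcon (hφt.eventually h0)⟩))
  refine Mz.of_cov (Cov.powers d.factorial_ne_zero).prod ?_
  rintro _ ⟨_, ⟨ε, hε, rfl⟩, rfl⟩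
  obtain ⟨c', hc'a, hc'0, hc', hc'1⟩ := hal ε hε
  set ψ : (Fin n → ℝ) → Fin n → ℝ := fun u i => ε i * u i ^ d.factorial with hψ
  have hψa : AnalyticAt ℝ ψ 0 :=
    AnalyticAt.pi fun i => analyticAt_const.mul ((analyticAt_coord i 0).pow _)
  have hψ0 : ψ 0 = 0 := by ext i; simp [ψ, d.factorial_ne_zero]
  have hψt : Tendsto ψ (𝓝 0) (𝓝 0) := by simpa only [hψ0] using hψa.continuousAt.tendsto
  have hMb' : Mon (fun i x => x i) fun x => b (φ (ψ x)) :=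
    hMb.comp hψa hψ0 fun i => (Mon.unit analyticAt_const
      (by rcases hε i with h | h <;> rw [h] <;> norm_num)).mul ((Mon.coord i).pow _)
  have hua : AnalyticAt ℝ (fun y : (Fin n → ℝ) × ℝ => u (φ (ψ y.1), y.2)) 0 := by
    refine AnalyticAt.comp (g := u) (by simpa [hψ0, hφ0, ← Prod.zero_eq_mk] using hu) (AnalyticAt.prod ?_
      analyticAt_snd)
    have hφψ : AnalyticAt ℝ (fun x => φ (ψ x)) 0 :=
      AnalyticAt.comp (by rw [hψ0]; exact hφa) hψa
    exact AnalyticAt.comp (g := fun x => φ (ψ x)) (f := Prod.fst) hφψ analyticAt_fst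
  have hd1 : d - 1 ∉ Z := fun hi => hZ0 _ hi hcd
  refine (mz_of_weighted hd IH _ γ rfl hγ _ hMb' c' hc'a (by rw [hc'0 _ hd1]; rfl)
    (hc'1.imp fun i hi => ⟨hZd i hi.1, hi.2⟩) _ hua
    (by simpa [hψ0, hφ0, ← Prod.zero_eq_mk] using hu0)).congr hcongr ?_
  have h1 : ∀ᶠ x : Fin n → ℝ in 𝓝 0, ∀ i ∈ Z, c i (φ (ψ x)) = mono γ x ^ (d - i) * c' i x := by
    rw [Filter.eventually_all_finset]
    exact hc'
  filter_upwards [hfst.eventually h1, hfst.eventually (hψt.eventually (hφt.eventually hZn))]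
    with y h1 h2
  congr 2
  refine Finset.sum_congr rfl fun i hi => ?_
  by_cases hiZ : i ∈ Z
  · rw [h1 i hiZ]
  · rw [h2 i (Finset.mem_filter.2 ⟨hi, hiZ⟩), hc'0 i hiZ]; simp

end Order

/-! ### Induction on the dimension -/

section Main

lemma Cov.conj {E E₁ E' E₂ : Type*} [NormedAddCommGroup E] [NormedSpace ℝ E]
    [NormedAddCommGroup E'] [NormedSpace ℝ E'] [NormedAddCommGroup E₁] [NormedSpace ℝ E₁]
    [NormedAddCommGroup E₂] [NormedSpace ℝ E₂] {Φ : Set (E → E')} (h : Cov Φ)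
    (A : E₁ ≃L[ℝ] E) (B : E' ≃L[ℝ] E₂) : Cov ((fun φ x => B (φ (A x))) '' Φ) := by
  classical
  refine ⟨?_, fun W hW => ?_⟩
  · rintro _ ⟨φ, hφ, rfl⟩
    have h1 := h.1 φ hφ
    refine ⟨?_, by simp [h1.2]⟩
    refine AnalyticAt.comp (g := B) (B.analyticAt _) (AnalyticAt.comp (g := φ) ?_ (A.analyticAt 0))
    rw [map_zero]; exact h1.1
  · obtain ⟨T, hT, hT'⟩ := h.2 (fun φ => A.symm ⁻¹' W fun x => B (φ (A x))) fun φ hφ =>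
      A.symm.continuous.continuousAt (by rw [map_zero]; exact hW _ ⟨φ, hφ, rfl⟩)
    refine ⟨T.image fun φ x => B (φ (A x)), ?_, ?_⟩
    · intro χ hχ
      obtain ⟨φ, hφ, rfl⟩ := Finset.mem_image.1 hχ
      exact ⟨φ, hT φ hφ, rfl⟩
    · have hB : Tendsto B.symm (𝓝 0) (𝓝 0) := by simpa using B.symm.continuous.tendsto 0
      filter_upwards [hB.eventually hT'] with y ⟨φ, hφ, x, hx, hxy⟩
      exact ⟨_, Finset.mem_image_of_mem _ hφ, A.symm x, hx, by simp [hxy]⟩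

/-- A nonzero analytic germ is nonzero on some line through the origin. -/
lemma exists_line {E : Type*} [NormedAddCommGroup E] [NormedSpace ℝ E] {f : E → ℝ}
    (hf : AnalyticAt ℝ f 0) (h : ¬ ∀ᶠ x in 𝓝 0, f x = 0) :
    ∃ v : E, f v ≠ 0 ∧ ¬ ∀ᶠ t : ℝ in 𝓝 0, f (t • v) = 0 := by
  obtain ⟨r, hr, hball⟩ := Metric.eventually_nhds_iff_ball.1 hf.eventually_analyticAt
  obtain ⟨v, hv, hv0⟩ : ∃ v ∈ Metric.ball (0 : E) r, f v ≠ 0 := by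
    by_contra! hcon
    exact h (mem_of_superset (Metric.ball_mem_nhds _ hr) hcon)
  refine ⟨v, hv0, fun h0 => hv0 ?_⟩
  let ℓ : ℝ →L[ℝ] E := (ContinuousLinearMap.id ℝ ℝ).smulRight v
  have hℓ : ∀ t, ℓ t = t • v := fun t => by simp [ℓ]
  have hS : Convex ℝ (ℓ ⁻¹' Metric.ball 0 r) :=
    (convex_ball _ _).linear_preimage ℓ.toLinearMap
  have han : AnalyticOnNhd ℝ (fun t => f (ℓ t)) (ℓ ⁻¹' Metric.ball 0 r) := fun t ht =>
    AnalyticAt.comp (g := f) (hball _ ht) (ℓ.analyticAt t)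
  have := han.eqOn_zero_of_preconnected_of_eventuallyEq_zero hS.isPreconnected (z₀ := 0)
    (by simpa using hr) (h0.mono fun t ht => by simpa [hℓ] using ht)
    (show (1 : ℝ) ∈ _ by simpa [hℓ] using hv)
  simpa [hℓ] using this

/-- The linear isomorphism `ℝⁿ⁺¹ ≃ ℝⁿ × ℝ` splitting off the first coordinate. -/
noncomputable def splitEquiv (n : ℕ) : (Fin (n + 1) → ℝ) ≃L[ℝ] (Fin n → ℝ) × ℝ :=
  ((Fin.consLinearEquiv ℝ (fun _ : Fin (n + 1) => ℝ)).symm.trans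
    (LinearEquiv.prodComm ℝ ℝ (Fin n → ℝ))).toContinuousLinearEquiv

/-- Local monomialization: every nonzero analytic germ on `ℝⁿ` becomes a monomial times a unit after
pulling back along the members of some cover. -/
theorem monomialization (n : ℕ) : ∀ f : (Fin n → ℝ) → ℝ, AnalyticAt ℝ f 0 →
    (¬ ∀ᶠ x in 𝓝 0, f x = 0) → Mz (Mon fun i x => x i) f := by
  induction n with
  | zero =>
    intro f hf h
    refine Mz.of_self (Mon.unit hf fun h0 => h (Eventually.of_forall fun x => ?_))
    rwa [Subsingleton.elim x 0]
  | succ n ih =>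
    intro f hf h
    by_cases hf0 : f 0 = 0
    swap
    · exact Mz.of_self (Mon.unit hf hf0)
    obtain ⟨v, hv, hline⟩ := exists_line hf h
    have hv0 : v ≠ 0 := fun h0 => hv (h0 ▸ hf0)
    let K := splitEquiv n
    have hK : ∀ x i, pcoord n i (K x) = x i := by
      intro x i
      refine Fin.cases ?_ (fun i => ?_) i <;> simp [pcoord, K, splitEquiv, Fin.consLinearEquiv, Fin.tail]
    obtain ⟨A, hA⟩ := SeparatingDual.exists_continuousLinearEquiv_apply_eq (R := ℝ)
      (x := K.symm (0, 1)) (y := v) (by simp) hv0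
    let B := K.symm.trans A
    have hB1 : ∀ z : ℝ, B (0, z) = z • v := by
      intro z
      have : ((0 : Fin n → ℝ), z) = z • ((0 : Fin n → ℝ), (1 : ℝ)) := by simp
      rw [this, map_smul]
      simp only [B, ContinuousLinearEquiv.trans_apply, hA]
    have hfB : AnalyticAt ℝ (fun y => f (B y)) 0 :=
      AnalyticAt.comp (g := f) (by rwa [map_zero]) (B.analyticAt 0)
    obtain ⟨d, hd⟩ : ∃ d : ℕ, analyticOrderAt (fun z : ℝ => f (B (0, z))) 0 = d := by
      refine (ENat.ne_top_iff_exists.1 fun htop => hline ?_).imp fun _ h => h.symm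
      simpa only [hB1] using analyticOrderAt_eq_top.1 htop
    obtain ⟨Φ, hΦ, hP⟩ := monOrder ih d (fun _ => 1) (fun y => f (B y)) analyticAt_const
      (by simpa using (inferInstance : (𝓝 (0 : Fin n → ℝ)).NeBot).ne) hfB hd
    refine ⟨_, hΦ.conj K B, ?_⟩
    rintro _ ⟨φ, hφ, rfl⟩
    obtain ⟨α, U, hU, hU0, hfU⟩ := hP φ hφ
    have hKt : Tendsto K (𝓝 0) (𝓝 0) := by simpa using K.continuous.tendsto 0
    refine ⟨α, fun x => U (K x), AnalyticAt.comp (g := U) (by rwa [map_zero]) (K.analyticAt 0),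
      by simpa using hU0, ?_⟩
    filter_upwards [hKt.eventually hfU] with x hx
    simpa only [one_mul, hK] using hx

end Main

/-! ### From monomials to the gradient inequality -/

section Loj
variable {E : Type*} [NormedAddCommGroup E] [NormedSpace ℝ E]

/-- The Łojasiewicz gradient inequality at the origin, for a function vanishing there. -/
def Loj (F : E → ℝ) : Prop :=
  ∃ θ : ℝ, 0 < θ ∧ θ < 1 ∧ ∃ C : ℝ, 0 < C ∧ ∀ᶠ y in 𝓝 (0 : E), |F y| ^ θ ≤ C * ‖fderiv ℝ F y‖

/-- The derivative of `x ^ α * U` in the direction `x j * e j`. -/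
lemma fderiv_mono_mul {n : ℕ} {α : Fin n → ℕ} {U F : (Fin n → ℝ) → ℝ} {y : Fin n → ℝ}
    (hU : DifferentiableAt ℝ U y) (hF : ∀ᶠ x in 𝓝 y, F x = mono α x * U x) (j : Fin n) :
    fderiv ℝ F y (Pi.single j (y j)) =
      mono α y * (α j * U y + fderiv ℝ U y (Pi.single j (y j))) := by
  have hm : DifferentiableAt ℝ (mono α) y :=
    (analyticAt_mono α fun i => analyticAt_coord i y).differentiableAt
  have hFd : DifferentiableAt ℝ F y := (hm.mul hU).congr_of_eventuallyEq hF
  set w : Fin n → ℝ := Pi.single j (y j) with hw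
  have hc : HasDerivAt (fun t : ℝ => y + t • w) w 0 := by
    simpa using ((hasDerivAt_id (0 : ℝ)).smul_const w).const_add y
  have hy : y + (0 : ℝ) • w = y := by simp
  have h1 : HasDerivAt (fun t : ℝ => F (y + t • w)) (fderiv ℝ F y w) 0 :=
    HasFDerivAt.comp_hasDerivAt (l := F) 0 (by rw [hy]; exact hFd.hasFDerivAt) hc
  have h2 : HasDerivAt (fun t : ℝ => U (y + t • w)) (fderiv ℝ U y w) 0 :=
    HasFDerivAt.comp_hasDerivAt (l := U) 0 (by rw [hy]; exact hU.hasFDerivAt) hc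
  have hmono : ∀ t : ℝ, mono α (y + t • w) = mono α y * (1 + t) ^ α j := by
    intro t
    have : ∀ i, (y + t • w) i ^ α i = y i ^ α i * if i = j then (1 + t) ^ α j else 1 := by
      intro i
      by_cases hi : i = j
      · subst hi; simp [hw, ← mul_pow]; ring
      · simp [hw, hi]
    simp only [mono, this, Finset.prod_mul_distrib, Finset.prod_ite_eq', Finset.mem_univ, if_true]
  have h3 : HasDerivAt (fun t : ℝ => (1 + t) ^ α j) (α j) 0 := by
    simpa using ((hasDerivAt_id (0 : ℝ)).const_add 1).fun_pow (α j)
  have h4 : HasDerivAt (fun t : ℝ => F (y + t • w))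
      (mono α y * (α j * U y + fderiv ℝ U y w)) 0 := by
    have := (h3.mul h2).const_mul (mono α y)
    simp only [add_zero, one_pow, one_mul, hy] at this
    refine this.congr_of_eventuallyEq ?_
    have ht : Tendsto (fun t : ℝ => y + t • w) (𝓝 0) (𝓝 y) := by
      have := hc.continuousAt.tendsto
      rwa [hy] at this
    filter_upwards [ht.eventually hF] with t ht
    rw [ht, hmono]; simp only [Pi.mul_apply]; ring
  exact h1.unique h4

/-- For `F = x ^ α * U`, the derivative of `F` in the direction `x j * e j` gives
`m |x ^ α| ≤ |x j| ‖F'‖` whenever `α j ≠ 0`. The product of the `α j`-th powers of these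
inequalities is `(m |x ^ α|) ^ |α| ≤ |x ^ α| ‖F'‖ ^ |α|`, that is,
`m |x ^ α| ^ (1 - 1 / |α|) ≤ ‖F'‖`. The exponent `|α| / (|α| + 1)` is a slightly larger one that is
positive even for `|α| = 1`. -/
lemma Mon.loj {n : ℕ} {F : (Fin n → ℝ) → ℝ} (h : Mon (fun i x => x i) F) (h0 : F 0 = 0) :
    Loj F := by
  obtain ⟨α, U, hU, hU0, hF⟩ := h
  have hα : α ≠ 0 := by
    rintro rfl
    have := hF.self_of_nhds
    rw [h0, mono_zero, one_mul] at this
    exact hU0 this.symm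
  set s := ∑ i, α i with hs
  have hspos : 0 < s := by
    obtain ⟨i, hi⟩ := Function.ne_iff.1 hα
    exact Finset.sum_pos' (fun _ _ => Nat.zero_le _) ⟨i, Finset.mem_univ _, Nat.pos_of_ne_zero hi⟩
  have hs1 : (1 : ℝ) ≤ s := by exact_mod_cast hspos
  set m := |U 0| / 2 with hm
  have hm0 : 0 < m := by positivity
  set M := |U 0| + 1 with hM
  have hM0 : 0 < M := by positivity
  have hV : ∀ᶠ y : Fin n → ℝ in 𝓝 0, ∀ j ∈ Finset.univ.filter (fun j => α j ≠ 0),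
      m < |α j * U y + fderiv ℝ U y (Pi.single j (y j))| := by
    rw [Filter.eventually_all_finset]
    intro j hj
    have hj : 1 ≤ α j := Nat.one_le_iff_ne_zero.2 (Finset.mem_filter.1 hj).2
    have hc : ContinuousAt
        (fun y : Fin n → ℝ => |α j * U y + fderiv ℝ U y (Pi.single j (y j))|) 0 := by
      refine ((continuousAt_const.mul hU.continuousAt).add
        (hU.fderiv.continuousAt.clm_apply ?_)).abs
      exact Continuous.continuousAt
        ((continuous_single (A := fun _ : Fin n => ℝ) j).comp (continuous_apply j))
    refine hc.eventually (lt_mem_nhds ?_)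
    have h1 : (1 : ℝ) ≤ α j := by exact_mod_cast hj
    simp only [Pi.zero_apply, Pi.single_zero, map_zero, add_zero, abs_mul, Nat.abs_cast]
    nlinarith [abs_pos.2 hU0]
  have hUM : ∀ᶠ y in 𝓝 (0 : Fin n → ℝ), |U y| < M :=
    hU.continuousAt.abs.eventually (gt_mem_nhds (by simp [hM]))
  have hm1 : ∀ᶠ y in 𝓝 (0 : Fin n → ℝ), |mono α y| < 1 := by
    have hc : ContinuousAt (mono α) (0 : Fin n → ℝ) :=
      (analyticAt_mono α fun i => analyticAt_coord i 0).continuousAt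
    exact hc.abs.eventually (gt_mem_nhds (by simp [mono_at_zero hα]))
  refine ⟨s / (s + 1), by positivity, (div_lt_one (by positivity)).2 (by linarith),
    M ^ ((s : ℝ) / (s + 1)) / m, by positivity, ?_⟩
  filter_upwards [hF.eventually_nhds, hV, hUM, hm1, hU.eventually_analyticAt]
    with y hFy hVy hUy hmy hUa
  have hFy' := hFy.self_of_nhds
  rcases eq_or_ne (mono α y) 0 with hz | hz
  · rw [hFy', hz, zero_mul, abs_zero, Real.zero_rpow (by positivity)]
    positivity
  set A := |mono α y| with hA
  set B := ‖fderiv ℝ F y‖ with hB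
  have hA0 : 0 < A := abs_pos.2 hz
  have hB0 : 0 ≤ B := norm_nonneg _
  have key : ∀ j, (m * A) ^ α j ≤ (|y j| * B) ^ α j := by
    intro j
    by_cases hj : α j = 0
    · simp [hj]
    refine pow_le_pow_left₀ (by positivity) ?_ _
    have h1 := fderiv_mono_mul hUa.differentiableAt hFy j
    have h2 : |fderiv ℝ F y (Pi.single j (y j))| ≤ B * |y j| := by
      simpa [Pi.norm_single] using (fderiv ℝ F y).le_opNorm (Pi.single j (y j))
    rw [h1, abs_mul] at h2
    have h3 := hVy j (by simpa using hj)
    nlinarith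
  have hprod : (m * A) ^ s ≤ A * B ^ s := by
    have h1 := Finset.prod_le_prod (s := Finset.univ) (fun j _ => by positivity)
      fun j _ => key j
    simp only [mul_pow _ B, Finset.prod_mul_distrib, Finset.prod_pow_eq_pow_sum] at h1
    have h2 : ∏ j, |y j| ^ α j = A := by
      simp [hA, mono, Finset.abs_prod, abs_pow]
    rwa [h2] at h1
  have hroot : m * A ≤ A ^ (1 / (s : ℝ)) * B := by
    refine le_of_pow_le_pow_left₀ hspos.ne' (by positivity) ?_
    rw [mul_pow (A ^ (1 / (s : ℝ))), ← Real.rpow_natCast (A ^ (1 / (s : ℝ))),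
      ← Real.rpow_mul hA0.le, one_div_mul_cancel (by positivity), Real.rpow_one]
    exact hprod
  have hAB : m * A ^ (1 - 1 / (s : ℝ)) ≤ B := by
    rw [Real.rpow_sub hA0, Real.rpow_one, ← mul_div_assoc, div_le_iff₀ (by positivity), mul_comm B]
    exact hroot
  calc |F y| ^ ((s : ℝ) / (s + 1)) ≤ (M * A) ^ ((s : ℝ) / (s + 1)) := by
        refine Real.rpow_le_rpow (abs_nonneg _) ?_ (by positivity)
        rw [hFy', abs_mul, mul_comm]
        gcongr
    _ = M ^ ((s : ℝ) / (s + 1)) * A ^ ((s : ℝ) / (s + 1)) := Real.mul_rpow hM0.le hA0.le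
    _ ≤ M ^ ((s : ℝ) / (s + 1)) * A ^ (1 - 1 / (s : ℝ)) := by
        refine mul_le_mul_of_nonneg_left ?_ (by positivity)
        refine Real.rpow_le_rpow_of_exponent_ge hA0 hmy.le ?_
        rw [one_sub_div (by positivity), div_le_div_iff₀ (by positivity) (by positivity)]
        nlinarith
    _ ≤ M ^ ((s : ℝ) / (s + 1)) / m * B := by
        rw [div_mul_eq_mul_div, mul_div_assoc]
        gcongr
        rwa [le_div_iff₀ hm0, mul_comm]

/-- The inequality descends along covers: by the chain rule `‖(F ∘ φ)'‖` is at most a constant times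
`‖F'‖`, and finitely many of the maps reach every point near `0`, so that the exponents and the
constants have a common bound. -/
lemma Loj.of_cov [CompleteSpace E] {E' : Type*} [NormedAddCommGroup E'] [NormedSpace ℝ E'] {Φ : Set (E' → E)}
    (hΦ : Cov Φ) {F : E → ℝ} (hF : AnalyticAt ℝ F 0) (h0 : F 0 = 0)
    (h : ∀ φ ∈ Φ, Loj fun x => F (φ x)) : Loj F := by
  choose! θ hθ0 hθ1 C hC hloj using h
  have hFd : ∀ᶠ y in 𝓝 (0 : E), DifferentiableAt ℝ F y :=
    hF.eventually_analyticAt.mono fun y hy => hy.differentiableAt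
  obtain ⟨T, hT, hcov⟩ := hΦ.2 (fun φ => {x | |F (φ x)| ^ θ φ ≤ C φ * ‖fderiv ℝ (fun x => F (φ x)) x‖ ∧
      DifferentiableAt ℝ F (φ x) ∧ DifferentiableAt ℝ φ x ∧
      ‖fderiv ℝ φ x‖ < ‖fderiv ℝ φ 0‖ + 1}) fun φ hφ => by
    have ha := (hΦ.1 φ hφ).1
    filter_upwards [hloj φ hφ, (hΦ.tendsto hφ).eventually hFd, ha.eventually_analyticAt,
      ha.fderiv.continuousAt.norm.eventually (gt_mem_nhds (lt_add_one _))] with x h1 h2 h3 h4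
    exact ⟨h1, h2, h3.differentiableAt, h4⟩
  obtain ⟨θ', ⟨hθT, hθ'0⟩, hθ'1⟩ : ∃ θ' : ℝ, ((∀ φ ∈ T, θ φ ≤ θ') ∧ 0 < θ') ∧ θ' < 1 := by
    have h1 : ∀ᶠ t in 𝓝 (1 : ℝ), (∀ φ ∈ T, θ φ ≤ t) ∧ 0 < t := by
      refine Eventually.and ?_ (lt_mem_nhds one_pos)
      rw [Filter.eventually_all_finset]
      exact fun φ hφ => (lt_mem_nhds (hθ1 φ (hT φ hφ))).mono fun t ht => ht.le
    exact ((h1.filter_mono nhdsWithin_le_nhds).and (self_mem_nhdsWithin (s := Set.Iio 1))).exists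
  obtain ⟨C', hC'T, hC'0⟩ : ∃ C' : ℝ,
      (∀ φ ∈ T, C φ * (‖fderiv ℝ φ 0‖ + 1) ≤ C') ∧ 0 < C' := by
    refine Eventually.exists (f := atTop) (Eventually.and ?_ (eventually_gt_atTop 0))
    rw [Filter.eventually_all_finset]
    exact fun φ hφ => eventually_ge_atTop _
  refine ⟨θ', hθ'0, hθ'1, C', hC'0, ?_⟩
  have hF1 : ∀ᶠ y in 𝓝 (0 : E), |F y| < 1 :=
    hF.continuousAt.abs.eventually (gt_mem_nhds (by simp [h0]))
  filter_upwards [hcov, hF1] with y ⟨φ, hφ, x, ⟨h1, h2, h3, h4⟩, hxy⟩ hy1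
  have hφ' := hT φ hφ
  have hchain : ‖fderiv ℝ (fun x => F (φ x)) x‖ ≤ ‖fderiv ℝ F y‖ * (‖fderiv ℝ φ 0‖ + 1) := by
    have : fderiv ℝ (fun x => F (φ x)) x = (fderiv ℝ F (φ x)).comp (fderiv ℝ φ x) :=
      fderiv_fun_comp x h2 h3
    rw [this, hxy]
    exact (ContinuousLinearMap.opNorm_comp_le _ _).trans (by gcongr)
  rw [hxy] at h1
  calc |F y| ^ θ' ≤ |F y| ^ θ φ :=
        Real.rpow_le_rpow_of_exponent_ge' (abs_nonneg _) hy1.le (hθ0 φ hφ').le (hθT φ hφ)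
    _ ≤ C φ * ‖fderiv ℝ (fun x => F (φ x)) x‖ := h1
    _ ≤ C φ * (‖fderiv ℝ F y‖ * (‖fderiv ℝ φ 0‖ + 1)) := by
        have := hC φ hφ'
        gcongr
    _ = (C φ * (‖fderiv ℝ φ 0‖ + 1)) * ‖fderiv ℝ F y‖ := by ring
    _ ≤ C' * ‖fderiv ℝ F y‖ := by
        gcongr
        exact hC'T φ hφ

lemma loj_of_analyticAt {n : ℕ} {F : (Fin n → ℝ) → ℝ} (hF : AnalyticAt ℝ F 0) (h0 : F 0 = 0) :
    Loj F := by
  by_cases h : ∀ᶠ x in 𝓝 0, F x = 0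
  · refine ⟨1 / 2, by norm_num, by norm_num, 1, one_pos, h.mono fun y hy => ?_⟩
    rw [hy, abs_zero, Real.zero_rpow (by norm_num)]
    positivity
  · obtain ⟨Φ, hΦ, hP⟩ := monomialization n F hF h
    exact Loj.of_cov hΦ hF h0 fun φ hφ => (hP φ hφ).loj (by simp only [(hΦ.1 φ hφ).2, h0])

end Loj

/-- Classical Łojasiewicz gradient inequality. If `f : ℝⁿ → ℝ` is real
analytic on an open set `U` and `y ∈ U` is a critical point of `f`, then there are
`α ∈ (0,1)`, `C > 0` and an open neighborhood `V ⊆ U` of `y` such that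
`|f x - f y| ^ (1 - α/2) ≤ C · ‖∇f x‖` for all `x ∈ V`. -/
theorem lojasiewicz_gradient_inequality
    (n : ℕ) (U : Set (EuclideanSpace ℝ (Fin n))) (hU : IsOpen U)
    (f : EuclideanSpace ℝ (Fin n) → ℝ) (hf : AnalyticOnNhd ℝ f U)
    (y : EuclideanSpace ℝ (Fin n)) (hy : y ∈ U)
    (hcrit : gradient f y = 0) :
    ∃ α : ℝ, α ∈ Set.Ioo (0 : ℝ) 1 ∧ ∃ C : ℝ, 0 < C ∧
      ∃ V : Set (EuclideanSpace ℝ (Fin n)), V ⊆ U ∧ IsOpen V ∧ y ∈ V ∧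
        ∀ x ∈ V, |f x - f y| ^ (1 - α / 2) ≤ C * ‖gradient f x‖ := by
  let e : EuclideanSpace ℝ (Fin n) ≃L[ℝ] (Fin n → ℝ) := EuclideanSpace.equiv (Fin n) ℝ
  have hτ : AnalyticAt ℝ (fun x => y + e.symm x) 0 := analyticAt_const.add (e.symm.analyticAt 0)
  have hF : AnalyticAt ℝ (fun x => f (y + e.symm x) - f y) 0 :=
    (AnalyticAt.comp (g := f) (by simpa using hf y hy) hτ).sub analyticAt_const
  obtain ⟨θ, hθ0, hθ1, C, hC, h⟩ := loj_of_analyticAt hF (by simp)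
  -- the exponent is raised to at least `3 / 4` so that `2 (1 - θ')` lies in `(0, 1)`
  let θ' := max θ (3 / 4)
  have hθ'1 : θ' < 1 := max_lt hθ1 (by norm_num)
  have hθ'2 : 3 / 4 ≤ θ' := le_max_right _ _
  have ht : Tendsto (fun x => e (x - y)) (𝓝 y) (𝓝 0) :=
    Continuous.tendsto' (by fun_prop) _ _ (by simp)
  have hf1 : ∀ᶠ x in 𝓝 y, |f x - f y| < 1 :=
    ((hf y hy).continuousAt.sub continuousAt_const).abs.eventually (gt_mem_nhds (by simp))
  let K : ℝ := ‖(e.symm : (Fin n → ℝ) →L[ℝ] EuclideanSpace ℝ (Fin n))‖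
  have hev : ∀ᶠ x in 𝓝 y, x ∈ U ∧ |f x - f y| ^ θ' ≤ C * (K + 1) * ‖gradient f x‖ := by
    filter_upwards [ht.eventually h, hf1, hU.mem_nhds hy] with x hx hx1 hxU
    refine ⟨hxU, ?_⟩
    have hx' : y + e.symm (e (x - y)) = x := by simp
    have hder : fderiv ℝ (fun z => f (y + e.symm z) - f y) (e (x - y)) =
        (fderiv ℝ f x).comp (e.symm : (Fin n → ℝ) →L[ℝ] EuclideanSpace ℝ (Fin n)) := by
      have h1 : HasFDerivAt f (fderiv ℝ f x) (y + e.symm (e (x - y))) := by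
        rw [hx']; exact (hf x hxU).differentiableAt.hasFDerivAt
      exact ((h1.comp (e (x - y)) (e.symm.hasFDerivAt.const_add y)).sub_const (f y)).fderiv
    have hgrad : ‖gradient f x‖ = ‖fderiv ℝ f x‖ := LinearIsometryEquiv.norm_map _ _
    rw [hder, hx'] at hx
    calc |f x - f y| ^ θ' ≤ |f x - f y| ^ θ :=
          Real.rpow_le_rpow_of_exponent_ge' (abs_nonneg _) hx1.le hθ0.le (le_max_left _ _)
      _ ≤ _ := hx
      _ ≤ C * (‖fderiv ℝ f x‖ * K) := by
          gcongr
          exact ContinuousLinearMap.opNorm_comp_le _ _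
      _ ≤ C * (K + 1) * ‖gradient f x‖ := by
          rw [hgrad]
          nlinarith [mul_nonneg hC.le (norm_nonneg (fderiv ℝ f x))]
  obtain ⟨V, hV, hVo, hyV⟩ := mem_nhds_iff.1 hev
  refine ⟨2 * (1 - θ'), ⟨by linarith, by linarith⟩, C * (K + 1), by positivity, V,
    fun x hx => (hV hx).1, hVo, hyV, fun x hx => ?_⟩
  rw [show 1 - 2 * (1 - θ') / 2 = θ' by ring]
  exact (hV hx).2
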